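/- arXiv:1901.00539 — 4 statements merged into one kernel-verified Lean document; each statement's English description precedes it below -/
import Mathlib

section
/- Let v : ℝ³ → [0,∞] be measurable and radial with v(x) = 0 for all |x| > R, and for n ∈ ℕ define v_n(x) := min{v(x), n}. Then the sequence of scattering lengths a(v_n) is monotone non-decreasing, satisfies a(v_n) ≤ a(v) for all n, and a(v_n) → a(v) as n → ∞. -/
/-!
Monotonicity of `A` and `A n ≤ a` follow from the monotonicity of the energy in the potential and
of `x ↦ 4πx/(1 - x/T)` on `[0, T)`. For convergence it remains to show that the infimum for `v` is
at most the supremum of the infima for `vₙ = min v n`, for the single radius `T = R + 1`.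

*Reduction to one dimension.* For an admissible `φ` some ray carries at most the spherical average
of the energy, and `u(r) = r φ(rω)` satisfies `4π ∫₀ᵀ (u'² + ½ V u²) ≤ (energy of φ) + 4πT`, the term
`4πT` coming from `(ψ + rψ')² = r²ψ'² + (rψ²)'` (`exists_radial_competitor`). Conversely, a `C¹`
function `u` with `u(T) = T` that vanishes near `0` gives the admissible function `u(|x|)/|x|`
(`exists_admissible`).

*Thresholding.* If `S` is a `C¹` soft threshold at level `ε`, then `S ∘ u` vanishes near `0` whenever
`u(0) = 0`, does not increase the kinetic energy, and satisfies `|S(u)| ≤ (1 - κ)⁻¹ |b|` as soon as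
`|u - b| ≤ κε` (`exists_thresholded`). In particular, competitors vanishing near the origin suffice
(`le_radialEnergy_of_forall`).

*Convergence* (`exists_radialEnergy_le`). By the parallelogram identity, almost minimizers `uₙ`, `uₖ`
for two large cut-offs are close in the Dirichlet norm, hence uniformly close. Fix one large `n` and
let `w` be the rescaled threshold of `uₙ`. For all `k ≥ n` the energy of `w` with cut-off `k` is, up
to factors close to `1` and small errors, at most that of `uₖ`, and monotone convergence in `k`
bounds the energy of `w` for the full potential. No minimizer or weak limit is needed.
-/

open MeasureTheory Filter Real Set
open scoped ENNReal Topology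

noncomputable section

abbrev E3 := EuclideanSpace ℝ (Fin 3)

/-- `v` is radial. -/
def Radial {α : Type*} (v : E3 → α) : Prop :=
  ∀ x y : E3, ‖x‖ = ‖y‖ → v x = v y

/-- The scattering energy functional `∫_{B(0,Rt)} (|∇φ|² + ½ v |φ|²)`. -/
def scatteringFunctional (v : E3 → ℝ≥0∞) (Rt : ℝ) (φ : E3 → ℝ) : ℝ≥0∞ :=
  ∫⁻ x in Metric.ball (0 : E3) Rt,
    ENNReal.ofReal (‖fderiv ℝ φ x‖ ^ 2) + (1 / 2) * v x * ENNReal.ofReal ((φ x) ^ 2)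

/-- `a` is the scattering length of the potential `v` of range `R`:
`4πa/(1 − a/R̃)` equals, for every `R̃ > R`, the infimum of the scattering functional
over functions equal to `1` on the sphere `{|x| = R̃}`. -/
def IsScatteringLength (v : E3 → ℝ≥0∞) (R a : ℝ) : Prop :=
  a ∈ Icc 0 R ∧
  ∀ Rt : ℝ, R < Rt →
    ENNReal.ofReal (4 * π * a / (1 - a / Rt)) =
      ⨅ φ : {φ : E3 → ℝ // ContDiff ℝ 1 φ ∧ ∀ x : E3, ‖x‖ = Rt → φ x = 1},
        scatteringFunctional v Rt φ.1

/-! ### Reduction to a one-dimensional problem -/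

/-- The surface measure of the unit sphere of `ℝ³` is `4π`. -/
lemma toSphere_univ_E3 :
    (volume : Measure E3).toSphere univ = ENNReal.ofReal (4 * π) := by
  rw [Measure.toSphere_apply_univ, EuclideanSpace.volume_ball_fin_three]
  simp only [finrank_euclideanSpace, Fintype.card_fin, ENNReal.ofReal_one, one_pow, one_mul]
  rw [← ENNReal.ofReal_natCast, ← ENNReal.ofReal_mul (by positivity)]
  congr 1
  push_cast
  ring

/-- Polar coordinates in `ℝ³`, with the spherical integral outside so that a single ray can be
selected by averaging. -/
lemma lintegral_ball_polar (F : E3 → ℝ≥0∞) (hF : Measurable F) (T : ℝ) :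
    ∫⁻ x in Metric.ball (0 : E3) T, F x =
      ∫⁻ ω, (∫⁻ r in Ioo 0 T, ENNReal.ofReal (r ^ 2) * F (r • (ω : E3)))
        ∂(volume : Measure E3).toSphere := by
  set G : E3 → ℝ≥0∞ := (Metric.ball (0 : E3) T).indicator F with hG
  have hGm : Measurable G := hF.indicator Metric.isOpen_ball.measurableSet
  rw [← lintegral_indicator Metric.isOpen_ball.measurableSet, ← hG]
  have h0 : ∫⁻ x, G x = ∫⁻ x : ({0}ᶜ : Set E3), G x.1 ∂(volume.comap Subtype.val) := by
    rw [lintegral_subtype_comap (measurableSet_singleton (0 : E3)).compl,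
      restrict_compl_singleton]
  have h1 := (volume : Measure E3).measurePreserving_homeomorphUnitSphereProd.lintegral_comp
    (f := fun p : Metric.sphere (0 : E3) 1 × Ioi (0 : ℝ) => G ((p.2 : ℝ) • (p.1 : E3)))
    (hGm.comp (by fun_prop))
  have h2 : ∀ x : ({0}ᶜ : Set E3), G x.1 =
      G (((homeomorphUnitSphereProd E3 x).2 : ℝ) • ((homeomorphUnitSphereProd E3 x).1 : E3)) := by
    intro x
    congr 1
    have := congrArg Subtype.val ((homeomorphUnitSphereProd E3).symm_apply_apply x)
    rw [← this, homeomorphUnitSphereProd_symm_apply_coe]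
  rw [h0, lintegral_congr h2, h1, lintegral_prod _ (by
    exact (hGm.comp (by fun_prop)).aemeasurable)]
  refine lintegral_congr fun ω => ?_
  simp only [finrank_euclideanSpace, Fintype.card_fin, Nat.add_one_sub_one]
  rw [Measure.volumeIoiPow, lintegral_withDensity_eq_lintegral_mul _ (by fun_prop)
    (by exact hGm.comp (by fun_prop))]
  simp only [Pi.mul_apply]
  rw [lintegral_subtype_comap measurableSet_Ioi
    (fun r : ℝ => ENNReal.ofReal (r ^ 2) * G (r • (ω : E3))),
    ← lintegral_indicator measurableSet_Ioi, ← lintegral_indicator measurableSet_Ioo]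
  refine lintegral_congr fun r => ?_
  have hω : ‖(ω : E3)‖ = 1 := by simp
  by_cases hr : 0 < r
  · by_cases hr' : r < T
    · simp [hG, hr, hr', indicator, norm_smul, hω, abs_of_pos hr]
    · simp [hG, hr, hr', indicator, norm_smul, hω, abs_of_pos hr]
  · simp [hr]

/-- The radial profile `r ↦ v(r e₀)` of a function on `ℝ³`. -/
def radialProfile (v : E3 → ℝ≥0∞) (r : ℝ) : ℝ≥0∞ :=
  v (r • EuclideanSpace.single (0 : Fin 3) (1 : ℝ))

/-- The one-dimensional energy `∫₀ᵀ (u'² + ½ W u²) dr`. -/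
def radialEnergy (W : ℝ → ℝ≥0∞) (T : ℝ) (u : ℝ → ℝ) : ℝ≥0∞ :=
  ∫⁻ r in Ioo 0 T, ENNReal.ofReal ((deriv u r) ^ 2) + (1 / 2) * W r * ENNReal.ofReal ((u r) ^ 2)

lemma measurable_radialProfile {v : E3 → ℝ≥0∞} (hv : Measurable v) :
    Measurable (radialProfile v) :=
  hv.comp (by fun_prop)

lemma Radial.eq_radialProfile {v : E3 → ℝ≥0∞} (hv : Radial v) (x : E3) :
    v x = radialProfile v ‖x‖ :=
  hv _ _ (by simp [norm_smul])

/-- Substituting `u = r ψ` turns the weight `r²` into `1`, at the price of the boundary term `T`,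
since `(ψ + r ψ')² = r² ψ'² + (r ψ²)'`. -/
lemma radialEnergy_id_mul {W : ℝ → ℝ≥0∞} {T : ℝ} (hT : 0 < T)
    {ψ : ℝ → ℝ} (hψ : ContDiff ℝ 1 ψ) (hψT : ψ T = 1) :
    radialEnergy W T (fun r => r * ψ r) =
      (∫⁻ r in Ioo 0 T, ENNReal.ofReal (r ^ 2) *
        (ENNReal.ofReal ((deriv ψ r) ^ 2) + (1 / 2) * W r * ENNReal.ofReal ((ψ r) ^ 2)))
        + ENNReal.ofReal T := by
  have hd : ∀ r, HasDerivAt ψ (deriv ψ r) r := fun r =>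
    (hψ.differentiable one_ne_zero r).hasDerivAt
  have hc : Continuous (deriv ψ) := hψ.continuous_deriv le_rfl
  have hcψ : Continuous ψ := hψ.continuous
  have hdu : ∀ r, deriv (fun r => r * ψ r) r = ψ r + r * deriv ψ r := fun r => by
    have : HasDerivAt (fun r => r * ψ r) (1 * ψ r + r * deriv ψ r) r :=
      (hasDerivAt_id' r).mul (hd r)
    rw [this.deriv, one_mul]
  -- The difference of the two kinetic densities is the exact derivative `(r ψ²)'`.
  have hftc : ∫ r in (0 : ℝ)..T, ((ψ r + r * deriv ψ r) ^ 2 - r ^ 2 * (deriv ψ r) ^ 2) = T := by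
    have hF : ∀ r ∈ uIcc 0 T, HasDerivAt (fun r => r * (ψ r) ^ 2)
        ((ψ r + r * deriv ψ r) ^ 2 - r ^ 2 * (deriv ψ r) ^ 2) r := fun r _ => by
      have : HasDerivAt (fun r => r * (ψ r) ^ 2)
          (1 * ψ r ^ 2 + r * (2 * ψ r ^ (2 - 1) * deriv ψ r)) r :=
        (hasDerivAt_id' r).mul ((hd r).pow 2)
      convert this using 1
      ring
    rw [intervalIntegral.integral_eq_sub_of_hasDerivAt hF
      (Continuous.intervalIntegrable (by fun_prop) _ _)]
    simp [hψT]
  have hi : ∀ f : ℝ → ℝ, Continuous f → IntervalIntegrable f volume 0 T :=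
    fun f hf => hf.intervalIntegrable _ _
  have key : ∫⁻ r in Ioo 0 T, ENNReal.ofReal ((ψ r + r * deriv ψ r) ^ 2) =
      (∫⁻ r in Ioo 0 T, ENNReal.ofReal (r ^ 2 * (deriv ψ r) ^ 2)) + ENNReal.ofReal T := by
    have hconv : ∀ f : ℝ → ℝ, Continuous f → (∀ r, 0 ≤ f r) →
        ∫⁻ r in Ioo 0 T, ENNReal.ofReal (f r) = ENNReal.ofReal (∫ r in (0 : ℝ)..T, f r) := by
      intro f hf hf0
      rw [intervalIntegral.integral_of_le hT.le, integral_Ioc_eq_integral_Ioo,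
        ofReal_integral_eq_lintegral_ofReal]
      · exact ((hi f hf).1).mono_set Ioo_subset_Ioc_self
      · exact ae_of_all _ hf0
    rw [hconv _ (by fun_prop) (fun r => sq_nonneg _),
      hconv _ (by fun_prop) (fun r => by positivity),
      ← ENNReal.ofReal_add (intervalIntegral.integral_nonneg hT.le fun r _ => by positivity) hT.le]
    congr 1
    rw [intervalIntegral.integral_sub (hi _ (by fun_prop)) (hi _ (by fun_prop))] at hftc
    linarith
  unfold radialEnergy
  simp_rw [hdu]
  rw [lintegral_add_left (by fun_prop), key]
  simp_rw [mul_add]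
  rw [lintegral_add_left (by fun_prop), add_right_comm]
  congr 2
  · refine lintegral_congr fun r => ?_
    rw [ENNReal.ofReal_mul (sq_nonneg _)]
  · refine lintegral_congr fun r => ?_
    rw [mul_pow, ENNReal.ofReal_mul (sq_nonneg _)]
    ring

/-- Restricting an admissible `φ` to a ray along which the energy does not exceed its spherical
average yields a competitor `u(r) = r φ(rω)` of the one-dimensional problem. -/
lemma exists_radial_competitor {v : E3 → ℝ≥0∞} (hv : Measurable v) (hrad : Radial v) {T : ℝ}
    (hT : 0 < T) {φ : E3 → ℝ} (hφ : ContDiff ℝ 1 φ) (hφT : ∀ x : E3, ‖x‖ = T → φ x = 1) :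
    ∃ u : ℝ → ℝ, ContDiff ℝ 1 u ∧ u 0 = 0 ∧ u T = T ∧
      ENNReal.ofReal (4 * π) * radialEnergy (radialProfile v) T u ≤
        scatteringFunctional v T φ + ENNReal.ofReal (4 * π * T) := by
  have hfd : Continuous (fderiv ℝ φ) := hφ.continuous_fderiv one_ne_zero
  have hcφ := hφ.continuous
  set F : E3 → ℝ≥0∞ := fun x =>
    ENNReal.ofReal (‖fderiv ℝ φ x‖ ^ 2) + (1 / 2) * v x * ENNReal.ofReal ((φ x) ^ 2) with hF
  have hFm : Measurable F := by fun_prop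
  have hpol : scatteringFunctional v T φ = _ := lintegral_ball_polar F hFm T
  set μ := (volume : Measure E3).toSphere with hμ
  set H : Metric.sphere (0 : E3) 1 → ℝ≥0∞ :=
    fun ω => ∫⁻ r in Ioo 0 T, ENNReal.ofReal (r ^ 2) * F (r • (ω : E3)) with hH
  have hHm : Measurable H := by
    refine Measurable.lintegral_prod_right' (f := fun p : Metric.sphere (0 : E3) 1 × ℝ =>
      ENNReal.ofReal (p.2 ^ 2) * F (p.2 • (p.1 : E3))) ?_
    fun_prop
  have hμ0 : μ ≠ 0 := Measure.toSphere_ne_zero _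
  obtain ⟨ω, hω⟩ := exists_le_laverage hμ0 hHm.aemeasurable
  have hω' : ENNReal.ofReal (4 * π) * H ω ≤ scatteringFunctional v T φ := by
    rw [hpol, ← toSphere_univ_E3, ← measure_mul_laverage]
    gcongr
  have hω1 : ‖(ω : E3)‖ = 1 := by simp
  set ψ : ℝ → ℝ := fun r => φ (r • (ω : E3)) with hψd
  have hψ : ContDiff ℝ 1 ψ := hφ.comp (by fun_prop)
  have hψT : ψ T = 1 := hφT _ (by simp [norm_smul, abs_of_pos hT])
  refine ⟨fun r => r * ψ r, by fun_prop, by simp, by simp [hψT], ?_⟩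
  rw [radialEnergy_id_mul hT hψ hψT, mul_add, ← ENNReal.ofReal_mul (by positivity)]
  gcongr
  refine le_trans ?_ hω'
  gcongr
  refine setLIntegral_mono' measurableSet_Ioo fun r hr => ?_
  have hvr : v (r • (ω : E3)) = radialProfile v r := by
    rw [hrad.eq_radialProfile, norm_smul, hω1, Real.norm_eq_abs, abs_of_pos hr.1, mul_one]
  have hder : deriv ψ r = fderiv ℝ φ (r • (ω : E3)) ω := by
    have h1 : HasFDerivAt φ (fderiv ℝ φ (r • (ω : E3))) (r • (ω : E3)) :=
      (hφ.differentiable one_ne_zero _).hasFDerivAt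
    have h2 : HasDerivAt (fun r : ℝ => r • (ω : E3)) (ω : E3) r := by
      simpa using (hasDerivAt_id r).smul_const (ω : E3)
    exact (h1.comp_hasDerivAt r h2).deriv
  simp only [hF, hvr]
  gcongr _ * (ENNReal.ofReal ?_ + _)
  rw [← sq_abs, hder, ← Real.norm_eq_abs]
  gcongr
  simpa [hω1] using (fderiv ℝ φ (r • (ω : E3))).le_opNorm ω

/-- A one-dimensional competitor `u` that vanishes near the origin gives the admissible function
`φ(x) = u(|x|)/|x|` on `ℝ³`. -/
lemma exists_admissible {v : E3 → ℝ≥0∞} (hv : Measurable v) (hrad : Radial v) {T : ℝ}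
    (hT : 0 < T) {u : ℝ → ℝ} (hu : ContDiff ℝ 1 u) (hu0 : ∀ᶠ r in 𝓝 0, u r = 0)
    (huT : u T = T) :
    ∃ φ : E3 → ℝ, ContDiff ℝ 1 φ ∧ (∀ x : E3, ‖x‖ = T → φ x = 1) ∧
      scatteringFunctional v T φ + ENNReal.ofReal (4 * π * T) ≤
        ENNReal.ofReal (4 * π) * radialEnergy (radialProfile v) T u := by
  set ψ : ℝ → ℝ := fun r => u r / r with hψd
  have hψ0 : ∀ᶠ r in 𝓝 0, ψ r = 0 := hu0.mono fun r hr => by simp [hψd, hr]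
  have hψ : ContDiff ℝ 1 ψ := by
    refine contDiff_iff_contDiffAt.2 fun r => ?_
    by_cases hr : r = 0
    · subst hr
      exact (contDiffAt_const (c := (0 : ℝ))).congr_of_eventuallyEq hψ0
    · exact hu.contDiffAt.div contDiffAt_id hr
  have hψT : ψ T = 1 := by simp [hψd, huT, hT.ne']
  have huψ : u = fun r => r * ψ r := by
    funext r
    by_cases hr : r = 0
    · simp [hr, hu0.self_of_nhds]
    · simp [hψd, mul_div_cancel₀, hr]
  set φ : E3 → ℝ := fun x => ψ ‖x‖ with hφd
  have hφ : ContDiff ℝ 1 φ := by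
    refine contDiff_iff_contDiffAt.2 fun x => ?_
    by_cases hx : x = 0
    · subst hx
      refine (contDiffAt_const (c := (0 : ℝ))).congr_of_eventuallyEq ?_
      have : Tendsto (fun x : E3 => ‖x‖) (𝓝 0) (𝓝 0) := by
        simpa using (continuous_norm (E := E3)).tendsto 0
      exact this.eventually hψ0
    · exact hψ.contDiffAt.comp x (contDiffAt_norm ℝ hx)
  refine ⟨φ, hφ, fun x hx => by simp [hφd, hx, hψT], ?_⟩
  have hfd : Continuous (fderiv ℝ φ) := hφ.continuous_fderiv one_ne_zero
  have hcφ := hφ.continuous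
  rw [huψ, radialEnergy_id_mul hT hψ hψT, mul_add, ← ENNReal.ofReal_mul (by positivity)]
  gcongr
  unfold scatteringFunctional
  rw [lintegral_ball_polar _ (by fun_prop), ← toSphere_univ_E3, mul_comm, ← lintegral_const]
  refine lintegral_mono fun ω => setLIntegral_mono' measurableSet_Ioo fun r hr => ?_
  have hω1 : ‖(ω : E3)‖ = 1 := by simp
  have hn : ‖r • (ω : E3)‖ = r := by
    rw [norm_smul, hω1, Real.norm_eq_abs, abs_of_pos hr.1, mul_one]
  have hne : r • (ω : E3) ≠ 0 := by
    rw [← norm_ne_zero_iff, hn]; exact hr.1.ne'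
  have hder : ‖fderiv ℝ φ (r • (ω : E3))‖ ≤ |deriv ψ r| := by
    have h1 : HasDerivAt ψ (deriv ψ r) ‖r • (ω : E3)‖ := by
      rw [hn]; exact (hψ.differentiable one_ne_zero r).hasDerivAt
    have h2 : HasFDerivAt (fun x : E3 => ‖x‖) (fderiv ℝ (fun x : E3 => ‖x‖) (r • (ω : E3)))
        (r • (ω : E3)) :=
      ((contDiffAt_norm ℝ hne (n := 1)).differentiableAt one_ne_zero).hasFDerivAt
    have h3 : HasFDerivAt φ _ (r • (ω : E3)) := h1.comp_hasFDerivAt _ h2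
    rw [h3.fderiv, norm_smul, Real.norm_eq_abs]
    refine mul_le_of_le_one_right (abs_nonneg _) ?_
    simpa using norm_fderiv_le_of_lipschitz ℝ (x₀ := r • (ω : E3)) (lipschitzWith_one_norm (E := E3))
  rw [hrad.eq_radialProfile, hn]
  simp only [hφd, hn]
  gcongr _ * (ENNReal.ofReal ?_ + _)
  rw [← sq_abs (deriv ψ r)]
  gcongr

/-- Competitors of the one-dimensional problem: `C¹` functions with the boundary values of
`u(r) = r ψ(r)`, `ψ(T) = 1`. -/
def IsCompetitor (T : ℝ) (u : ℝ → ℝ) : Prop :=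
  ContDiff ℝ 1 u ∧ u 0 = 0 ∧ u T = T

/-! ### Soft thresholding -/

/-- The piecewise linear function equal to `0` on `(-∞, ε]` and to `1` on `[2ε, ∞)`. -/
def ramp (ε s : ℝ) : ℝ := max 0 (min 1 (s / ε - 1))

/-- A `C¹` version of the soft threshold `t ↦ (t - ε)₊`, namely the primitive of `ramp ε`. -/
def softThreshold (ε t : ℝ) : ℝ := ∫ s in (0 : ℝ)..t, ramp ε s

lemma continuous_ramp (ε : ℝ) : Continuous (ramp ε) := by
  unfold ramp; fun_prop

lemma ramp_nonneg (ε s : ℝ) : 0 ≤ ramp ε s := le_max_left _ _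

lemma ramp_le_one (ε s : ℝ) : ramp ε s ≤ 1 := max_le zero_le_one (min_le_left _ _)

lemma ramp_eq_zero {ε s : ℝ} (hε : 0 < ε) (hs : s ≤ ε) : ramp ε s = 0 := by
  have : s / ε ≤ 1 := (div_le_one hε).2 hs
  exact max_eq_left ((min_le_right _ _).trans (by linarith))

lemma ramp_eq_one {ε s : ℝ} (hε : 0 < ε) (hs : 2 * ε ≤ s) : ramp ε s = 1 := by
  have : 2 ≤ s / ε := (le_div_iff₀ hε).2 hs
  rw [ramp, min_eq_left (by linarith), max_eq_right zero_le_one]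

lemma hasDerivAt_softThreshold (ε t : ℝ) : HasDerivAt (softThreshold ε) (ramp ε t) t :=
  ((continuous_ramp ε).integral_hasStrictDerivAt 0 t).hasDerivAt

lemma contDiff_softThreshold (ε : ℝ) : ContDiff ℝ 1 (softThreshold ε) := by
  refine contDiff_one_iff_deriv.2 ⟨fun t => (hasDerivAt_softThreshold ε t).differentiableAt, ?_⟩
  have : deriv (softThreshold ε) = ramp ε := funext fun t => (hasDerivAt_softThreshold ε t).deriv
  rw [this]
  exact continuous_ramp ε

lemma softThreshold_eq_zero {ε t : ℝ} (hε : 0 < ε) (ht : t ≤ ε) : softThreshold ε t = 0 := by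
  unfold softThreshold
  refine intervalIntegral.integral_zero_ae (ae_of_all _ fun s hs => ?_)
  refine ramp_eq_zero hε ?_
  rcases le_max_iff.1 hs.2 with h | h <;> linarith

lemma softThreshold_nonneg {ε t : ℝ} (ht : 0 ≤ t) : 0 ≤ softThreshold ε t :=
  intervalIntegral.integral_nonneg ht fun s _ => ramp_nonneg ε s

lemma softThreshold_le {ε t : ℝ} (ht : 0 ≤ t) : softThreshold ε t ≤ t := by
  have := intervalIntegral.integral_mono_on (μ := volume) (a := 0) (b := t) ht
    ((continuous_ramp ε).intervalIntegrable _ _) (continuous_const.intervalIntegrable _ _)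
    fun s _ => ramp_le_one ε s
  simpa [softThreshold] using this

lemma le_softThreshold {ε t : ℝ} (hε : 0 < ε) (ht : 2 * ε ≤ t) :
    t - 2 * ε ≤ softThreshold ε t := by
  have hi : ∀ a b, IntervalIntegrable (ramp ε) volume a b := fun a b =>
    (continuous_ramp ε).intervalIntegrable _ _
  have h1 : ∫ s in (2 * ε)..t, ramp ε s = t - 2 * ε := by
    rw [intervalIntegral.integral_congr (g := fun _ => (1 : ℝ))]
    · simp
    · intro s hs
      rw [uIcc_of_le ht] at hs
      exact ramp_eq_one hε hs.1
  have h2 := intervalIntegral.integral_add_adjacent_intervals (hi 0 (2 * ε)) (hi (2 * ε) t)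
  have h3 : 0 ≤ softThreshold ε (2 * ε) := softThreshold_nonneg (by linarith)
  unfold softThreshold at *
  linarith

/-- Thresholding is insensitive to perturbations that are small compared to `ε`: where
`softThreshold ε a` is nonzero, `a > ε`, so `|a - b| ≤ κ ε` bounds `a` by a multiple of `b`. -/
lemma softThreshold_sq_le {ε κ a b : ℝ} (hε : 0 < ε) (hκ : 0 < κ) (hκ1 : κ < 1)
    (hab : |a - b| ≤ κ * ε) : ((1 - κ) * softThreshold ε a) ^ 2 ≤ b ^ 2 := by
  rcases le_or_gt a ε with h | h
  · rw [softThreshold_eq_zero hε h]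
    simp [sq_nonneg]
  · have ha : 0 ≤ a := by linarith
    have h1 := softThreshold_le (ε := ε) ha
    have h2 := softThreshold_nonneg (ε := ε) ha
    have h3 := abs_le.1 hab
    have h4 : κ * ε ≤ κ * a := by gcongr
    have h5 : (1 - κ) * softThreshold ε a ≤ (1 - κ) * a := by
      have : 0 ≤ 1 - κ := by linarith
      gcongr
    exact pow_le_pow_left₀ (mul_nonneg (by linarith) h2) (by linarith [h3.2]) 2

/-- The competitor `w = T / softThreshold ε T • softThreshold ε ∘ u` with `ε = κT/2`: it vanishes
near the origin, its kinetic energy is controlled by that of `u`, and its values are controlled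
by those of any function uniformly close to `u`. -/
lemma exists_thresholded {T κ : ℝ} (hT : 0 < T) (hκ : 0 < κ) (hκ1 : κ < 1) {u : ℝ → ℝ}
    (hu : IsCompetitor T u) :
    ∃ w : ℝ → ℝ, ContDiff ℝ 1 w ∧ (∀ᶠ r in 𝓝 0, w r = 0) ∧ w T = T ∧
      (∀ r, (1 - κ) ^ 4 * (deriv w r) ^ 2 ≤ (deriv u r) ^ 2) ∧
      ∀ r b, |u r - b| ≤ κ ^ 2 * T / 2 → (1 - κ) ^ 4 * (w r) ^ 2 ≤ b ^ 2 := by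
  obtain ⟨hu1, hu0, huT⟩ := hu
  set ε := κ * T / 2 with hε
  have hε0 : 0 < ε := by positivity
  have hκ' : 0 < 1 - κ := by linarith
  have hlow : (1 - κ) * T ≤ softThreshold ε T := by
    have := le_softThreshold hε0 (t := T) (by rw [hε]; nlinarith)
    rw [hε] at this ⊢
    linarith
  have hpos : 0 < softThreshold ε T := lt_of_lt_of_le (by positivity) hlow
  set c := T / softThreshold ε T with hc
  have hc0 : 0 < c := by positivity
  have hc1 : (1 - κ) * c ≤ 1 := by
    rw [hc, ← mul_div_assoc, div_le_one hpos]; exact hlow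
  have hc2 : (1 - κ) ^ 2 * c ^ 2 ≤ 1 := by
    rw [← mul_pow]; exact pow_le_one₀ (by positivity) hc1
  have hd : ∀ r, HasDerivAt (fun r => c * softThreshold ε (u r))
      (c * (ramp ε (u r) * deriv u r)) r := fun r =>
    ((hasDerivAt_softThreshold ε (u r)).comp r
      (hu1.differentiable one_ne_zero r).hasDerivAt).const_mul c
  refine ⟨fun r => c * softThreshold ε (u r),
    contDiff_const.mul ((contDiff_softThreshold ε).comp hu1), ?_, ?_, ?_, ?_⟩
  · have : ∀ᶠ r in 𝓝 0, u r < ε :=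
      hu1.continuous.continuousAt.eventually_lt continuousAt_const (by rw [hu0]; exact hε0)
    filter_upwards [this] with r hr
    rw [softThreshold_eq_zero hε0 hr.le, mul_zero]
  · simp only [huT, hc]
    field_simp
  · intro r
    rw [(hd r).deriv]
    have h1 : (ramp ε (u r)) ^ 2 ≤ 1 := pow_le_one₀ (ramp_nonneg _ _) (ramp_le_one _ _)
    have h2 : (1 - κ) ^ 2 ≤ 1 := pow_le_one₀ hκ'.le (by linarith)
    calc (1 - κ) ^ 4 * (c * (ramp ε (u r) * deriv u r)) ^ 2
        = (1 - κ) ^ 2 * ((1 - κ) ^ 2 * c ^ 2) * (ramp ε (u r)) ^ 2 * (deriv u r) ^ 2 := by ring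
      _ ≤ 1 * 1 * 1 * (deriv u r) ^ 2 := by gcongr
      _ = _ := by ring
  · intro r b hb
    have h1 := softThreshold_sq_le (a := u r) (b := b) hε0 hκ hκ1 (by rw [hε]; linarith)
    calc (1 - κ) ^ 4 * (c * softThreshold ε (u r)) ^ 2
        = ((1 - κ) ^ 2 * c ^ 2) * ((1 - κ) * softThreshold ε (u r)) ^ 2 := by ring
      _ ≤ 1 * b ^ 2 := by gcongr
      _ = _ := one_mul _

/-! ### Strong convexity and the one-dimensional Sobolev bound -/

lemma half_mul_ofReal (x : ℝ) : (1 / 2 : ℝ≥0∞) * ENNReal.ofReal x = ENNReal.ofReal (x / 2) := by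
  rw [div_eq_inv_mul x, ENNReal.ofReal_mul (by norm_num), ENNReal.ofReal_inv_of_pos two_pos]
  simp

/-- Uniform strong convexity of the energy (parallelogram identity). -/
lemma radialEnergy_midpoint (W : ℝ → ℝ≥0∞) (hW : Measurable W) {T : ℝ} {u w : ℝ → ℝ}
    (hu : ContDiff ℝ 1 u) (hw : ContDiff ℝ 1 w) :
    radialEnergy W T (fun r => (u r + w r) / 2) +
        ∫⁻ r in Ioo 0 T, ENNReal.ofReal ((deriv u r - deriv w r) ^ 2 / 4) ≤
      (1 / 2) * radialEnergy W T u + (1 / 2) * radialEnergy W T w := by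
  have hcu : Continuous (deriv u) := hu.continuous_deriv le_rfl
  have hcw : Continuous (deriv w) := hw.continuous_deriv le_rfl
  have hu' := hu.continuous
  have hw' := hw.continuous
  have hd : ∀ r, deriv (fun r => (u r + w r) / 2) r = (deriv u r + deriv w r) / 2 := fun r =>
    (((hu.differentiable one_ne_zero r).hasDerivAt.add
      (hw.differentiable one_ne_zero r).hasDerivAt).div_const 2).deriv
  unfold radialEnergy
  rw [← lintegral_const_mul _ (by fun_prop), ← lintegral_const_mul _ (by fun_prop),
    ← lintegral_add_right _ (by fun_prop), ← lintegral_add_right _ (by fun_prop)]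
  refine lintegral_mono fun r => ?_
  simp only [hd]
  have e1 : ENNReal.ofReal (((deriv u r + deriv w r) / 2) ^ 2) +
      ENNReal.ofReal ((deriv u r - deriv w r) ^ 2 / 4) =
      (1 / 2) * ENNReal.ofReal ((deriv u r) ^ 2) + (1 / 2) * ENNReal.ofReal ((deriv w r) ^ 2) := by
    rw [half_mul_ofReal, half_mul_ofReal, ← ENNReal.ofReal_add (by positivity) (by positivity),
      ← ENNReal.ofReal_add (by positivity) (by positivity)]
    congr 1
    ring
  have e2 : ENNReal.ofReal (((u r + w r) / 2) ^ 2) ≤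
      (1 / 2) * ENNReal.ofReal ((u r) ^ 2) + (1 / 2) * ENNReal.ofReal ((w r) ^ 2) := by
    rw [half_mul_ofReal, half_mul_ofReal, ← ENNReal.ofReal_add (by positivity) (by positivity)]
    refine ENNReal.ofReal_le_ofReal ?_
    nlinarith [sq_nonneg (u r - w r)]
  calc _ = (ENNReal.ofReal (((deriv u r + deriv w r) / 2) ^ 2) +
        ENNReal.ofReal ((deriv u r - deriv w r) ^ 2 / 4)) +
        1 / 2 * W r * ENNReal.ofReal (((u r + w r) / 2) ^ 2) := by ring
    _ ≤ ((1 / 2) * ENNReal.ofReal ((deriv u r) ^ 2) + (1 / 2) * ENNReal.ofReal ((deriv w r) ^ 2)) +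
        1 / 2 * W r *
          ((1 / 2) * ENNReal.ofReal ((u r) ^ 2) + (1 / 2) * ENNReal.ofReal ((w r) ^ 2)) := by
      rw [e1]; gcongr
    _ = _ := by ring

/-- One-dimensional Sobolev bound, by Cauchy-Schwarz for `f(r) = ∫₀ʳ f'`. -/
lemma sq_le_of_lintegral_deriv_sq_le {T C : ℝ} (hC : 0 ≤ C) {f : ℝ → ℝ} (hf : ContDiff ℝ 1 f)
    (hf0 : f 0 = 0)
    (h : ∫⁻ r in Ioo 0 T, ENNReal.ofReal ((deriv f r) ^ 2 / 4) ≤ ENNReal.ofReal C)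
    {r : ℝ} (hr : r ∈ Ioo 0 T) : (f r) ^ 2 ≤ 4 * T * C := by
  have hc : Continuous (deriv f) := hf.continuous_deriv le_rfl
  have hi : ∀ f : ℝ → ℝ, Continuous f → IntervalIntegrable f volume 0 r :=
    fun f hf => hf.intervalIntegrable _ _
  have h1 : ∫ s in (0 : ℝ)..r, deriv f s = f r := by
    rw [intervalIntegral.integral_deriv_eq_sub (fun s _ => hf.differentiable one_ne_zero s)
      (hi _ hc), hf0, sub_zero]
  have h2 : ∫ s in (0 : ℝ)..r, (deriv f s) ^ 2 / 4 ≤ C := by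
    rw [← ENNReal.ofReal_le_ofReal_iff hC]
    refine le_trans ?_ h
    rw [intervalIntegral.integral_of_le hr.1.le, integral_Ioc_eq_integral_Ioo,
      ofReal_integral_eq_lintegral_ofReal]
    · exact lintegral_mono_set (Ioo_subset_Ioo_right hr.2.le)
    · exact ((hi _ (by fun_prop)).1).mono_set Ioo_subset_Ioc_self
    · exact ae_of_all _ fun s => by positivity
  -- The nonnegativity of the variance of `f'` over `(0, r)`, whose mean is `f r / r`.
  have h3 : 0 ≤ ∫ s in (0 : ℝ)..r, (deriv f s - f r / r) ^ 2 / 4 :=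
    intervalIntegral.integral_nonneg hr.1.le fun s _ => by positivity
  have h4 : ∫ s in (0 : ℝ)..r, (deriv f s - f r / r) ^ 2 / 4 =
      (∫ s in (0 : ℝ)..r, (deriv f s) ^ 2 / 4) - (f r / r) / 2 * f r + r * (f r / r) ^ 2 / 4 := by
    have : ∀ s, (deriv f s - f r / r) ^ 2 / 4 =
        (deriv f s) ^ 2 / 4 - (f r / r) / 2 * deriv f s + (f r / r) ^ 2 / 4 := fun s => by ring
    simp_rw [this]
    rw [intervalIntegral.integral_add (hi _ (by fun_prop)) (hi _ (by fun_prop)),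
      intervalIntegral.integral_sub (hi _ (by fun_prop)) (hi _ (by fun_prop)),
      intervalIntegral.integral_const_mul, h1]
    simp [mul_div_assoc]
  have hr0 := hr.1
  have h5 : r * (f r / r) ^ 2 = (f r) ^ 2 / r := by field_simp
  have h6 : (f r / r) * f r = (f r) ^ 2 / r := by ring
  have h7 : (f r) ^ 2 / r ≤ 4 * C := by nlinarith
  rw [div_le_iff₀ hr0] at h7
  nlinarith [hr.2]

/-! ### Convergence of the one-dimensional infima -/

lemma radialEnergy_congr_mono {W₁ W₂ : ℝ → ℝ≥0∞} (h : ∀ r, W₁ r ≤ W₂ r) (T : ℝ) (u : ℝ → ℝ) :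
    radialEnergy W₁ T u ≤ radialEnergy W₂ T u := by
  unfold radialEnergy
  gcongr with r
  exact h r

/-- Monotone convergence of the energy of a fixed function along the cut-off potentials. -/
lemma radialEnergy_eq_iSup {W : ℝ → ℝ≥0∞} (hW : Measurable W) {T : ℝ} {u : ℝ → ℝ}
    (hu : ContDiff ℝ 1 u) :
    radialEnergy W T u = ⨆ n : ℕ, radialEnergy (fun r => min (W r) (n : ℝ≥0∞)) T u := by
  have hcu : Continuous (deriv u) := hu.continuous_deriv le_rfl
  have hu' := hu.continuous
  unfold radialEnergy
  rw [← lintegral_iSup (fun n => by fun_prop)]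
  · refine lintegral_congr fun r => ?_
    rw [← ENNReal.add_iSup, ← ENNReal.iSup_mul, ← ENNReal.mul_iSup, ← inf_iSup_eq,
      ENNReal.iSup_natCast, inf_top_eq]
  · intro m n hmn r
    dsimp only
    gcongr

/-- The loss of `(1 - κ) ^ 4` incurred by thresholding disappears as `κ → 0`. -/
lemma le_of_forall_contraction {x y : ℝ≥0∞}
    (h : ∀ κ : ℝ, 0 < κ → κ < 1 → ENNReal.ofReal ((1 - κ) ^ 4) * x ≤ y) : x ≤ y := by
  have h1 : Tendsto (fun κ : ℝ => ENNReal.ofReal ((1 - κ) ^ 4) * x) (𝓝[>] 0) (𝓝 (1 * x)) := by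
    refine ENNReal.Tendsto.mul_const ?_ (Or.inl one_ne_zero)
    have : Tendsto (fun κ : ℝ => ENNReal.ofReal ((1 - κ) ^ 4)) (𝓝 0)
        (𝓝 (ENNReal.ofReal ((1 - 0) ^ 4))) :=
      (ENNReal.continuous_ofReal.comp (by fun_prop : Continuous fun κ : ℝ => (1 - κ) ^ 4)).tendsto 0
    simpa using this.mono_left nhdsWithin_le_nhds
  rw [one_mul] at h1
  refine le_of_tendsto h1 ?_
  filter_upwards [Ioo_mem_nhdsGT (zero_lt_one (α := ℝ))] with κ hκ
  exact h κ hκ.1 hκ.2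

/-- A lower bound valid for all competitors vanishing near the origin is valid for all
competitors. -/
lemma le_radialEnergy_of_forall {W : ℝ → ℝ≥0∞} {T : ℝ} (hT : 0 < T) {C : ℝ≥0∞}
    (h : ∀ w : ℝ → ℝ, ContDiff ℝ 1 w → (∀ᶠ r in 𝓝 0, w r = 0) → w T = T →
      C ≤ radialEnergy W T w) {u : ℝ → ℝ} (hu : IsCompetitor T u) :
    C ≤ radialEnergy W T u := by
  refine le_of_forall_contraction fun κ hκ hκ1 => ?_
  obtain ⟨w, hw, hw0, hwT, hdw, hbw⟩ := exists_thresholded hT hκ hκ1 hu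
  refine (mul_le_mul_right (h w hw hw0 hwT) _).trans ?_
  unfold radialEnergy
  rw [← lintegral_const_mul' _ _ ENNReal.ofReal_ne_top]
  refine lintegral_mono fun r => ?_
  dsimp only
  rw [mul_add, mul_left_comm, ← ENNReal.ofReal_mul (by positivity),
    ← ENNReal.ofReal_mul (by positivity)]
  gcongr
  · exact hdw r
  · exact hbw r _ (by rw [sub_self, abs_zero]; positivity)

/-- The one-dimensional convergence theorem: if `m n` are the infima for the cut-off potentials
and `m n ≤ L`, then the infimum for the full potential is at most `L`. Almost minimizers for
different cut-offs are uniformly close by strong convexity, hence a thresholded almost minimizer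
for a large cut-off `n` has controlled energy for every cut-off `k ≥ n`. -/
lemma exists_radialEnergy_le {W : ℝ → ℝ≥0∞} (hW : Measurable W) {T : ℝ} (hT : 0 < T)
    {m : ℕ → ℝ} (hm0 : ∀ n, 0 ≤ m n) {L : ℝ} (hmL : ∀ n, m n ≤ L)
    (hlow : ∀ n u, IsCompetitor T u →
      ENNReal.ofReal (m n) ≤ radialEnergy (fun r => min (W r) (n : ℝ≥0∞)) T u)
    (hup : ∀ (n : ℕ) (η : ℝ), 0 < η → ∃ u, IsCompetitor T u ∧
      radialEnergy (fun r => min (W r) (n : ℝ≥0∞)) T u ≤ ENNReal.ofReal (m n + η))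
    {κ : ℝ} (hκ : 0 < κ) (hκ1 : κ < 1) :
    ∃ w : ℝ → ℝ, ContDiff ℝ 1 w ∧ (∀ᶠ r in 𝓝 0, w r = 0) ∧ w T = T ∧
      ENNReal.ofReal ((1 - κ) ^ 4) * radialEnergy W T w ≤
        ENNReal.ofReal ((1 + κ) * (L + κ) + κ) := by
  -- The three requirements on `η` are the ones used below: for the total energy, for the kinetic
  -- energy of the difference of two almost minimizers, and for their uniform distance.
  obtain ⟨η, hη, hη1, hη2, hη3⟩ : ∃ η : ℝ, 0 < η ∧ η ≤ κ ∧ (1 + 1 / κ) * (6 * η) ≤ κ ∧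
      T * (6 * η) ≤ (κ ^ 2 * T / 2) ^ 2 := by
    have h1 : Tendsto (fun η : ℝ => (1 + 1 / κ) * (6 * η)) (𝓝[>] 0) (𝓝 0) := by
      have : Tendsto (fun η : ℝ => (1 + 1 / κ) * (6 * η)) (𝓝 0) (𝓝 ((1 + 1 / κ) * (6 * 0))) :=
        Continuous.tendsto (by fun_prop) 0
      simpa using this.mono_left nhdsWithin_le_nhds
    have h2 : Tendsto (fun η : ℝ => T * (6 * η)) (𝓝[>] 0) (𝓝 0) := by
      have : Tendsto (fun η : ℝ => T * (6 * η)) (𝓝 0) (𝓝 (T * (6 * 0))) :=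
        Continuous.tendsto (by fun_prop) 0
      simpa using this.mono_left nhdsWithin_le_nhds
    have h3 : ∀ᶠ η in 𝓝[>] (0 : ℝ), η ∈ Ioo 0 κ := Ioo_mem_nhdsGT hκ
    obtain ⟨η, hη, ha, hb⟩ := (h3.and
      ((h1.eventually_le_const hκ).and
        (h2.eventually_le_const (by positivity : 0 < (κ ^ 2 * T / 2) ^ 2)))).exists
    exact ⟨η, hη.1, hη.2.le, ha, hb⟩
  obtain ⟨n, hn⟩ : ∃ n, ∀ k, m k ≤ m n + η := by
    have hbdd : BddAbove (range m) := ⟨L, by rintro _ ⟨n, rfl⟩; exact hmL n⟩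
    obtain ⟨n, hn⟩ := exists_lt_of_lt_ciSup (sub_lt_self (⨆ n, m n) hη)
    exact ⟨n, fun k => by linarith [le_ciSup hbdd k]⟩
  obtain ⟨u, hu, huE⟩ := hup n η hη
  obtain ⟨w, hw, hw0, hwT, hdw, hbw⟩ := exists_thresholded hT hκ hκ1 hu
  refine ⟨w, hw, hw0, hwT, ?_⟩
  have hmono : Monotone fun k : ℕ => radialEnergy (fun r => min (W r) (k : ℝ≥0∞)) T w := by
    intro i j hij
    refine radialEnergy_congr_mono (fun r => ?_) T w
    gcongr
  suffices hk : ∀ k, n ≤ k → ENNReal.ofReal ((1 - κ) ^ 4) *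
      radialEnergy (fun r => min (W r) (k : ℝ≥0∞)) T w ≤
        ENNReal.ofReal ((1 + κ) * (L + κ) + κ) by
    rw [radialEnergy_eq_iSup hW hw, ENNReal.mul_iSup]
    refine iSup_le fun k => le_trans ?_ (hk (max n k) (le_max_left _ _))
    exact mul_le_mul_right (hmono (le_max_right n k)) _
  intro k hnk
  obtain ⟨z, hz, hzE⟩ := hup k η hη
  have hWk : Measurable fun r => min (W r) (k : ℝ≥0∞) := by fun_prop
  have hWn : Measurable fun r => min (W r) (n : ℝ≥0∞) := by fun_prop
  have hcu : Continuous (deriv u) := hu.1.continuous_deriv le_rfl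
  have hcz : Continuous (deriv z) := hz.1.continuous_deriv le_rfl
  have hz' := hz.1.continuous
  have hdiff : ∫⁻ r in Ioo 0 T, ENNReal.ofReal ((deriv u r - deriv z r) ^ 2 / 4) ≤
      ENNReal.ofReal (3 * η / 2) := by
    have h1 := radialEnergy_midpoint _ hWn (T := T) hu.1 hz.1
    have h2 := hlow n (fun r => (u r + z r) / 2)
      ⟨(hu.1.add hz.1).div_const 2, by simp [hu.2.1, hz.2.1], by simp [hu.2.2, hz.2.2]⟩
    have h3 : radialEnergy (fun r => min (W r) (n : ℝ≥0∞)) T z ≤ ENNReal.ofReal (m k + η) :=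
      (radialEnergy_congr_mono (fun r => by gcongr) T z).trans hzE
    have h4 : ENNReal.ofReal (m n) +
        ∫⁻ r in Ioo 0 T, ENNReal.ofReal ((deriv u r - deriv z r) ^ 2 / 4) ≤
        ENNReal.ofReal (m n) + ENNReal.ofReal (3 * η / 2) := by
      refine (add_le_add_left h2 _).trans (h1.trans ?_)
      calc _ ≤ (1 / 2) * ENNReal.ofReal (m n + η) + (1 / 2) * ENNReal.ofReal (m k + η) := by gcongr
        _ = ENNReal.ofReal ((m n + η) / 2 + (m k + η) / 2) := by
          rw [half_mul_ofReal, half_mul_ofReal, ← ENNReal.ofReal_add (by linarith [hm0 n]) (by linarith [hm0 k])]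
        _ ≤ ENNReal.ofReal (m n + 3 * η / 2) :=
          ENNReal.ofReal_le_ofReal (by linarith [hn k])
        _ = _ := ENNReal.ofReal_add (hm0 n) (by positivity)
    exact (ENNReal.add_le_add_iff_left ENNReal.ofReal_ne_top).1 h4
  have hsub : ∀ r, deriv (fun r => u r - z r) r = deriv u r - deriv z r := fun r =>
    ((hu.1.differentiable one_ne_zero r).hasDerivAt.sub
      (hz.1.differentiable one_ne_zero r).hasDerivAt).deriv
  have hclose : ∀ r ∈ Ioo 0 T, |u r - z r| ≤ κ ^ 2 * T / 2 := by
    intro r hr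
    have h1 := sq_le_of_lintegral_deriv_sq_le (T := T) (C := 3 * η / 2) (by positivity)
      (hu.1.sub hz.1) (by simp [hu.2.1, hz.2.1])
      (by
        refine le_trans (le_of_eq ?_) hdiff
        refine lintegral_congr fun r => ?_
        rw [← hsub r]) hr
    refine abs_le_of_sq_le_sq ?_ (by positivity)
    refine le_trans h1 (le_trans (le_of_eq ?_) hη3)
    ring
  have hLk : ENNReal.ofReal (m k + η) ≤ ENNReal.ofReal (L + κ) :=
    ENNReal.ofReal_le_ofReal (by linarith [hmL k])
  have hL0 : 0 ≤ L := (hm0 0).trans (hmL 0)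
  have hpt : ∀ r ∈ Ioo 0 T, ENNReal.ofReal ((1 - κ) ^ 4) *
      (ENNReal.ofReal ((deriv w r) ^ 2) +
        1 / 2 * min (W r) (k : ℝ≥0∞) * ENNReal.ofReal ((w r) ^ 2)) ≤
      ENNReal.ofReal (1 + κ) * (ENNReal.ofReal ((deriv z r) ^ 2) +
        1 / 2 * min (W r) (k : ℝ≥0∞) * ENNReal.ofReal ((z r) ^ 2)) +
      ENNReal.ofReal ((1 + 1 / κ) * 4) * ENNReal.ofReal ((deriv u r - deriv z r) ^ 2 / 4) := by
    intro r hr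
    have e1 : (deriv u r) ^ 2 ≤ (1 + κ) * (deriv z r) ^ 2 +
        (1 + 1 / κ) * 4 * ((deriv u r - deriv z r) ^ 2 / 4) := by
      have : 0 ≤ (κ * deriv z r - (deriv u r - deriv z r)) ^ 2 / κ := by positivity
      have e : (κ * deriv z r - (deriv u r - deriv z r)) ^ 2 / κ =
        (1 + κ) * (deriv z r) ^ 2 +
        (1 + 1 / κ) * 4 * ((deriv u r - deriv z r) ^ 2 / 4) - (deriv u r) ^ 2 := by
        field_simp
        ring
      linarith
    rw [mul_add, mul_add, mul_left_comm, ← ENNReal.ofReal_mul (by positivity),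
      ← ENNReal.ofReal_mul (by positivity), ← ENNReal.ofReal_mul (by positivity),
      ← ENNReal.ofReal_mul (by positivity), add_right_comm,
      ← ENNReal.ofReal_add (by positivity) (by positivity)]
    refine add_le_add (ENNReal.ofReal_le_ofReal ((hdw r).trans e1)) ?_
    refine (mul_le_mul_right (ENNReal.ofReal_le_ofReal (hbw r _ (hclose r hr))) _).trans ?_
    refine le_mul_of_one_le_left zero_le ?_
    rw [ENNReal.one_le_ofReal]
    linarith
  calc _ = ∫⁻ r in Ioo 0 T, ENNReal.ofReal ((1 - κ) ^ 4) *
      (ENNReal.ofReal ((deriv w r) ^ 2) +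
        1 / 2 * min (W r) (k : ℝ≥0∞) * ENNReal.ofReal ((w r) ^ 2)) := by
        rw [lintegral_const_mul' _ _ ENNReal.ofReal_ne_top]; rfl
    _ ≤ _ := setLIntegral_mono' measurableSet_Ioo hpt
    _ = ENNReal.ofReal (1 + κ) * radialEnergy (fun r => min (W r) (k : ℝ≥0∞)) T z +
        ENNReal.ofReal ((1 + 1 / κ) * 4) *
          ∫⁻ r in Ioo 0 T, ENNReal.ofReal ((deriv u r - deriv z r) ^ 2 / 4) := by
        rw [lintegral_add_right _ (by fun_prop), lintegral_const_mul' _ _ ENNReal.ofReal_ne_top,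
          lintegral_const_mul' _ _ ENNReal.ofReal_ne_top]
        rfl
    _ ≤ ENNReal.ofReal (1 + κ) * ENNReal.ofReal (L + κ) +
        ENNReal.ofReal ((1 + 1 / κ) * 4) * ENNReal.ofReal (3 * η / 2) := by
        gcongr
        exact hzE.trans hLk
    _ = ENNReal.ofReal ((1 + κ) * (L + κ) + (1 + 1 / κ) * (6 * η)) := by
        rw [← ENNReal.ofReal_mul (by positivity), ← ENNReal.ofReal_mul (by positivity),
          ← ENNReal.ofReal_add (by positivity) (by positivity)]
        congr 1
        ring
    _ ≤ _ := ENNReal.ofReal_le_ofReal (by linarith)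

/-! ### Scattering lengths -/

/-- Strict monotonicity of `x ↦ 4πx/(1 - x/T)` on `(-∞, T)`, stated contrapositively. -/
lemma le_of_div_le_div {T x y : ℝ} (hT : 0 < T) (hx : x < T) (hy : y < T)
    (h : 4 * π * x / (1 - x / T) ≤ 4 * π * y / (1 - y / T)) : x ≤ y := by
  have hx' : 0 < 1 - x / T := by rw [sub_pos, div_lt_one hT]; exact hx
  have hy' : 0 < 1 - y / T := by rw [sub_pos, div_lt_one hT]; exact hy
  rw [div_le_div_iff₀ hx' hy'] at h
  have e : 4 * π * y * (1 - x / T) - 4 * π * x * (1 - y / T) = 4 * π * (y - x) := by ring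
  have : 0 ≤ 4 * π * (y - x) := by linarith
  have := nonneg_of_mul_nonneg_right this (by positivity)
  linarith

lemma div_nonneg_of_lt {T x : ℝ} (hT : 0 < T) (hx0 : 0 ≤ x) (hx : x < T) :
    0 ≤ 4 * π * x / (1 - x / T) := by
  have hx' : 0 < 1 - x / T := by rw [sub_pos, div_lt_one hT]; exact hx
  positivity

lemma IsScatteringLength.le_of_le {v₁ v₂ : E3 → ℝ≥0∞} {R a₁ a₂ : ℝ} (h : ∀ x, v₁ x ≤ v₂ x)
    (h₁ : IsScatteringLength v₁ R a₁) (h₂ : IsScatteringLength v₂ R a₂) : a₁ ≤ a₂ := by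
  have hR : 0 ≤ R := h₁.1.1.trans h₁.1.2
  have hT : 0 < R + 1 := by linarith
  have ha₁ : a₁ < R + 1 := by linarith [h₁.1.2]
  have ha₂ : a₂ < R + 1 := by linarith [h₂.1.2]
  refine le_of_div_le_div hT ha₁ ha₂ ?_
  rw [← ENNReal.ofReal_le_ofReal_iff (div_nonneg_of_lt hT h₂.1.1 ha₂),
    h₁.2 _ (by linarith), h₂.2 _ (by linarith)]
  refine iInf_mono fun φ => ?_
  unfold scatteringFunctional
  gcongr with x
  exact h x

/-- The one-dimensional infimum for a potential of scattering length `a` is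
`(4πa/(1 - a/T) + 4πT)/(4π)`: lower bound. -/
lemma IsScatteringLength.le_radialEnergy {v : E3 → ℝ≥0∞} (hv : Measurable v) (hrad : Radial v)
    {R a T : ℝ} (h : IsScatteringLength v R a) (hT : 0 < T) (hRT : R < T) {u : ℝ → ℝ}
    (hu : IsCompetitor T u) :
    ENNReal.ofReal ((4 * π * a / (1 - a / T) + 4 * π * T) / (4 * π)) ≤
      radialEnergy (radialProfile v) T u := by
  have hg := div_nonneg_of_lt hT h.1.1 (h.1.2.trans_lt hRT)
  refine le_radialEnergy_of_forall hT (fun w hw hw0 hwT => ?_) hu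
  obtain ⟨φ, hφ, hφT, hle⟩ := exists_admissible hv hrad hT hw hw0 hwT
  have h4 : 0 < 4 * π := by positivity
  rw [← ENNReal.mul_le_mul_iff_right (a := ENNReal.ofReal (4 * π)) (by simpa using h4)
    ENNReal.ofReal_ne_top, ← ENNReal.ofReal_mul h4.le, mul_div_cancel₀ _ h4.ne',
    ENNReal.ofReal_add hg (by positivity), h.2 T hRT]
  refine le_trans ?_ hle
  gcongr
  exact iInf_le (fun φ : {φ : E3 → ℝ // ContDiff ℝ 1 φ ∧ ∀ x : E3, ‖x‖ = T → φ x = 1} =>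
    scatteringFunctional v T φ.1) ⟨φ, hφ, hφT⟩

/-- The one-dimensional infimum for a potential of scattering length `a` is
`(4πa/(1 - a/T) + 4πT)/(4π)`: upper bound. -/
lemma IsScatteringLength.exists_radialEnergy_le {v : E3 → ℝ≥0∞} (hv : Measurable v)
    (hrad : Radial v) {R a T : ℝ} (h : IsScatteringLength v R a) (hT : 0 < T) (hRT : R < T)
    {η : ℝ} (hη : 0 < η) :
    ∃ u, IsCompetitor T u ∧ radialEnergy (radialProfile v) T u ≤
      ENNReal.ofReal ((4 * π * a / (1 - a / T) + 4 * π * T) / (4 * π) + η) := by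
  have hg := div_nonneg_of_lt hT h.1.1 (h.1.2.trans_lt hRT)
  have h4 : 0 < 4 * π := by positivity
  have hlt : (⨅ φ : {φ : E3 → ℝ // ContDiff ℝ 1 φ ∧ ∀ x : E3, ‖x‖ = T → φ x = 1},
      scatteringFunctional v T φ.1) <
      ENNReal.ofReal (4 * π * a / (1 - a / T) + 4 * π * η) := by
    rw [← h.2 T hRT, ENNReal.ofReal_lt_ofReal_iff (by positivity)]
    linarith [mul_pos h4 hη]
  obtain ⟨⟨φ, hφ, hφT⟩, hlt⟩ := iInf_lt_iff.1 hlt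
  obtain ⟨u, hu, hu0, huT, hle⟩ := exists_radial_competitor hv hrad hT hφ hφT
  refine ⟨u, ⟨hu, hu0, huT⟩, ?_⟩
  rw [← ENNReal.mul_le_mul_iff_right (a := ENNReal.ofReal (4 * π)) (by simpa using h4)
    ENNReal.ofReal_ne_top, ← ENNReal.ofReal_mul h4.le, mul_add, mul_div_cancel₀ _ h4.ne',
    add_right_comm, ENNReal.ofReal_add (by positivity) (by positivity)]
  refine hle.trans ?_
  gcongr

/-- **Lemma 3.2.** The scattering lengths of the cut-off potentials `v_n = min{v, n}`
increase monotonically to the scattering length of `v`. -/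
theorem scatteringLength_truncation_approx
    (R : ℝ) (v : E3 → ℝ≥0∞) (a : ℝ)
    (hmeas : Measurable v) (hrad : Radial v)
    (hsupp : ∀ x : E3, R < ‖x‖ → v x = 0)
    (ha : IsScatteringLength v R a)
    (A : ℕ → ℝ)
    (hA : ∀ n : ℕ, IsScatteringLength (fun x => min (v x) (n : ℝ≥0∞)) R (A n)) :
    Monotone A ∧ (∀ n : ℕ, A n ≤ a) ∧ Tendsto A atTop (𝓝 a) := by
  have hmono : Monotone A := fun n k hnk =>
    (hA n).le_of_le (fun x => by gcongr) (hA k)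
  have hle : ∀ n, A n ≤ a := fun n => (hA n).le_of_le (fun x => min_le_left _ _) ha
  refine ⟨hmono, hle, ?_⟩
  have hbdd : BddAbove (range A) := ⟨a, by rintro _ ⟨n, rfl⟩; exact hle n⟩
  set s := ⨆ n, A n with hs
  have hAs : ∀ n, A n ≤ s := le_ciSup hbdd
  have hsa : s ≤ a := ciSup_le hle
  suffices has : a ≤ s by
    rw [le_antisymm has hsa]
    exact tendsto_atTop_ciSup hmono hbdd
  have hR : 0 ≤ R := ha.1.1.trans ha.1.2
  set T := R + 1 with hTdef
  have hT : 0 < T := by linarith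
  have hRT : R < T := by linarith
  have haT : a < T := by linarith [ha.1.2]
  have h4 : 0 < 4 * π := by positivity
  set g : ℝ → ℝ := fun x => 4 * π * x / (1 - x / T) with hg
  have hgmono : ∀ x y, 0 ≤ x → x ≤ y → y < T → g x ≤ g y := by
    intro x y hx hxy hy
    have : 0 < 1 - y / T := by rw [sub_pos, div_lt_one hT]; exact hy
    have hy0 : 0 ≤ y := hx.trans hxy
    simp only [hg]
    gcongr
  have hA0 : ∀ n, 0 ≤ A n := fun n => (hA n).1.1
  have hg0 : ∀ n, 0 ≤ g (A n) := fun n => div_nonneg_of_lt hT (hA0 n) ((hle n).trans_lt haT)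
  have hvn : ∀ n : ℕ, Measurable fun x => min (v x) (n : ℝ≥0∞) := fun n => by fun_prop
  have hrn : ∀ n : ℕ, Radial fun x => min (v x) (n : ℝ≥0∞) := fun n x y hxy => by
    simp only [hrad x y hxy]
  have key : ∀ κ : ℝ, 0 < κ → κ < 1 → (1 - κ) ^ 4 * ((g a + 4 * π * T) / (4 * π)) ≤
      (1 + κ) * ((g s + 4 * π * T) / (4 * π) + κ) + κ := by
    intro κ hκ hκ1
    have hgs : 0 ≤ g s := div_nonneg_of_lt hT ((hA0 0).trans (hAs 0)) (hsa.trans_lt haT)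
    obtain ⟨w, hw, hw0, hwT, hwE⟩ := _root_.exists_radialEnergy_le
      (measurable_radialProfile hmeas) hT
      (m := fun n => (g (A n) + 4 * π * T) / (4 * π)) (L := (g s + 4 * π * T) / (4 * π))
      (fun n => by have := hg0 n; positivity)
      (fun n => by
        have := hgmono _ _ (hA0 n) (hAs n) (hsa.trans_lt haT)
        gcongr)
      (fun n u hu => (hA n).le_radialEnergy (hvn n) (hrn n) hT hRT hu)
      (fun n η hη => (hA n).exists_radialEnergy_le (hvn n) (hrn n) hT hRT hη) hκ hκ1
    have hlow := ha.le_radialEnergy hmeas hrad hT hRT ⟨hw, hw0.self_of_nhds, hwT⟩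
    rw [← ENNReal.ofReal_le_ofReal_iff (by positivity), ENNReal.ofReal_mul (by positivity)]
    exact (mul_le_mul_right hlow _).trans hwE
  have hlim : (1 - 0) ^ 4 * ((g a + 4 * π * T) / (4 * π)) ≤
      (1 + 0) * ((g s + 4 * π * T) / (4 * π) + 0) + 0 := by
    refine le_of_tendsto_of_tendsto (b := 𝓝[>] (0 : ℝ))
      (f := fun κ => (1 - κ) ^ 4 * ((g a + 4 * π * T) / (4 * π)))
      (g := fun κ => (1 + κ) * ((g s + 4 * π * T) / (4 * π) + κ) + κ)
      ((Continuous.tendsto (by fun_prop) 0).mono_left nhdsWithin_le_nhds)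
      ((Continuous.tendsto (by fun_prop) 0).mono_left nhdsWithin_le_nhds) ?_
    filter_upwards [Ioo_mem_nhdsGT (zero_lt_one (α := ℝ))] with κ hκ
    exact key κ hκ.1 hκ.2
  have hlim' : (g a + 4 * π * T) / (4 * π) ≤ (g s + 4 * π * T) / (4 * π) := by simpa using hlim
  rw [div_le_div_iff_of_pos_right h4] at hlim'
  exact le_of_div_le_div hT haT (hsa.trans_lt haT) (by linarith)
end
end

section
/- Let v : ℝ³ → [0,∞) be measurable, radial, integrable, with v(x) = 0 for all |x| > R, and let a be its scattering length. Suppose ω : ℝ³ → [0,1] is measurable with ω(x) = a/|x| for |x| > R and satisfies the scattering equation −Δω = ½ v(1−ω) in the sense of distributions on ℝ³. Then g := v(1−ω) is integrable and ∫_{ℝ³} g(x) dx = 8π a. -/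
/-!
The distributional equation is tested against a radial cutoff `φ(x) = f(|x|²)` that equals `1` on a
neighbourhood of the closed ball of radius `R`. Since `g = v(1-ω)` vanishes outside that ball, the
right-hand side is `-½ ∫ g`. Since `Δφ` vanishes on that ball and `ω = a/|x|` outside it, the
left-hand side is `a ∫ Δφ/|x|`. In polar coordinates this is `4πa ∫₀^∞ F'(r) dr` with
`F(r) = 2r² f'(r²) + f(r²)`, which is `-4πa F(0) = -4πa`. Hence `∫ g = 8πa`.
-/


open MeasureTheory Filter Real Set
open scoped ENNReal Topology

noncomputable section

/-- The Laplacian of a function on `ℝ³` (sum of the second partial derivatives). -/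
def lap (φ : E3 → ℝ) (x : E3) : ℝ :=
  ∑ k : Fin 3,
    fderiv ℝ (fun y => fderiv ℝ φ y (EuclideanSpace.single k (1 : ℝ))) x
      (EuclideanSpace.single k (1 : ℝ))

/-- `ω` is a scattering solution for the potential `v` of range `R` and scattering
length `a`: it takes values in `[0,1]`, equals `a/|x|` outside the range, and satisfies
`−Δω = ½ v (1 − ω)` in the sense of distributions. -/
def IsScatteringSolution (v : E3 → ℝ) (R a : ℝ) (ω : E3 → ℝ) : Prop :=
  Measurable ω ∧ (∀ x, ω x ∈ Icc (0 : ℝ) 1) ∧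
  (∀ x : E3, R < ‖x‖ → ω x = a / ‖x‖) ∧
  ∀ φ : E3 → ℝ, ContDiff ℝ (⊤ : ℕ∞) φ → HasCompactSupport φ →
    ∫ x, ω x * lap φ x = -∫ x, (1 / 2) * (v x * (1 - ω x)) * φ x

/-- The profile, as a function of `t = |x|²`, of a radial cutoff: it is `1` for `t ≤ R² + 1` and
`0` for `t ≥ R² + 2`. -/
def cutoffProfile (R t : ℝ) : ℝ := Real.smoothTransition (R ^ 2 + 2 - t)

lemma cutoffProfile_contDiff (R : ℝ) : ContDiff ℝ (⊤ : ℕ∞) (cutoffProfile R) :=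
  Real.smoothTransition.contDiff.comp (contDiff_const.sub contDiff_id)

lemma cutoffProfile_one {R t : ℝ} (h : t ≤ R ^ 2 + 1) : cutoffProfile R t = 1 :=
  Real.smoothTransition.one_of_one_le (by linarith)

lemma cutoffProfile_zero {R t : ℝ} (h : R ^ 2 + 2 ≤ t) : cutoffProfile R t = 0 :=
  Real.smoothTransition.zero_of_nonpos (by linarith)

lemma cutoffProfile_deriv_of_lt {R t : ℝ} (h : t < R ^ 2 + 1) :
    deriv (cutoffProfile R) t = 0 := by
  have : cutoffProfile R =ᶠ[𝓝 t] fun _ => (1 : ℝ) := by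
    filter_upwards [Iio_mem_nhds h] with s hs using cutoffProfile_one (le_of_lt hs)
  rw [this.deriv_eq, deriv_const]

lemma cutoffProfile_deriv_deriv_of_lt {R t : ℝ} (h : t < R ^ 2 + 1) :
    deriv (deriv (cutoffProfile R)) t = 0 := by
  have : deriv (cutoffProfile R) =ᶠ[𝓝 t] fun _ => (0 : ℝ) := by
    filter_upwards [Iio_mem_nhds h] with s hs using cutoffProfile_deriv_of_lt hs
  rw [this.deriv_eq, deriv_const]

lemma cutoffProfile_deriv_of_gt {R t : ℝ} (h : R ^ 2 + 2 < t) :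
    deriv (cutoffProfile R) t = 0 := by
  have : cutoffProfile R =ᶠ[𝓝 t] fun _ => (0 : ℝ) := by
    filter_upwards [Ioi_mem_nhds h] with s hs using cutoffProfile_zero (le_of_lt hs)
  rw [this.deriv_eq, deriv_const]

/-- The Laplacian on `ℝ³` of a function of `t = |x|²` is `4 t f''(t) + 6 f'(t)`. -/
lemma lap_comp_norm_sq {f : ℝ → ℝ} (hf : ContDiff ℝ 2 f) (x : E3) :
    lap (fun y => f (‖y‖ ^ 2)) x =
      4 * ‖x‖ ^ 2 * deriv (deriv f) (‖x‖ ^ 2) + 6 * deriv f (‖x‖ ^ 2) := by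
  have hf1 : ContDiff ℝ 1 (deriv f) := ((contDiff_succ_iff_deriv (n := 1)).1 hf).2.2
  have hd {h : ℝ → ℝ} (hh : Differentiable ℝ h) (y : E3) :
      HasFDerivAt (fun y : E3 => h (‖y‖ ^ 2))
        (deriv h (‖y‖ ^ 2) • (2 • (innerSL ℝ y))) y :=
    (hh _).hasDerivAt.comp_hasFDerivAt y (hasStrictFDerivAt_norm_sq y).hasFDerivAt
  have hin (y : E3) (k : Fin 3) :
      (innerSL ℝ y) (EuclideanSpace.single k (1 : ℝ)) = y k := by
    simp [EuclideanSpace.inner_single_right]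
  have h1 (k : Fin 3) (y : E3) :
      fderiv ℝ (fun y : E3 => f (‖y‖ ^ 2)) y (EuclideanSpace.single k (1 : ℝ)) =
        deriv f (‖y‖ ^ 2) * (2 * y k) := by
    rw [(hd (hf.differentiable (by norm_num)) y).fderiv]
    simp only [smul_apply, hin, nsmul_eq_mul, smul_eq_mul]
    norm_num
  have h2 (k : Fin 3) :
      fderiv ℝ (fun y : E3 => deriv f (‖y‖ ^ 2) * (2 * y k)) x
        (EuclideanSpace.single k (1 : ℝ)) =
        4 * x k ^ 2 * deriv (deriv f) (‖x‖ ^ 2) + 2 * deriv f (‖x‖ ^ 2) := by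
    have hp : HasFDerivAt (fun y : E3 => 2 * y k)
        ((2 : ℝ) • (EuclideanSpace.proj k : E3 →L[ℝ] ℝ)) x :=
      (EuclideanSpace.proj k : E3 →L[ℝ] ℝ).hasFDerivAt.const_mul 2
    have hpk : (EuclideanSpace.proj k : E3 →L[ℝ] ℝ) (EuclideanSpace.single k (1 : ℝ)) = 1 := by
      simp
    have hm := ((hd (hf1.differentiable (by norm_num)) x).mul hp).fderiv
    refine (DFunLike.congr_fun hm _).trans ?_
    simp only [add_apply, smul_apply, hin, hpk, nsmul_eq_mul, smul_eq_mul]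
    push_cast
    ring
  have hn : ‖x‖ ^ 2 = x 0 ^ 2 + x 1 ^ 2 + x 2 ^ 2 := by
    simp [EuclideanSpace.norm_sq_eq, Fin.sum_univ_three]
  simp only [lap, h1, h2, Fin.sum_univ_three]
  linear_combination -4 * deriv (deriv f) (‖x‖ ^ 2) * hn

/-- The radial part of `∫ Δφ/|x| = -4π φ(0)`: the weighted integrand is an exact derivative. -/
lemma integral_radial (R : ℝ) :
    ∫ r in Ioi (0 : ℝ), (4 * r ^ 3 * deriv (deriv (cutoffProfile R)) (r ^ 2) +
      6 * r * deriv (cutoffProfile R) (r ^ 2)) = -1 := by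
  have hf : ContDiff ℝ 3 (cutoffProfile R) :=
    contDiff_infty.1 (cutoffProfile_contDiff R) 3
  have hf2 : ContDiff ℝ 2 (deriv (cutoffProfile R)) :=
    ((contDiff_succ_iff_deriv (n := 2)).1 hf).2.2
  set F : ℝ → ℝ := fun r =>
    2 * r ^ 2 * deriv (cutoffProfile R) (r ^ 2) + cutoffProfile R (r ^ 2) with hF
  have hFc : ContDiff ℝ 1 F := by
    have e1 : ContDiff ℝ 1 (fun r : ℝ => deriv (cutoffProfile R) (r ^ 2)) :=
      (hf2.of_le (by norm_num)).comp (contDiff_id.pow 2)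
    have e2 : ContDiff ℝ 1 (fun r : ℝ => cutoffProfile R (r ^ 2)) :=
      (hf.of_le (by norm_num)).comp (contDiff_id.pow 2)
    exact ((contDiff_const.mul (contDiff_id.pow 2)).mul e1).add e2
  have hFs : HasCompactSupport F := by
    refine HasCompactSupport.intro (isCompact_closedBall (0 : ℝ) (R ^ 2 + 2)) fun r hr => ?_
    have hr' : R ^ 2 + 2 < |r| := by simpa using hr
    have h2 : R ^ 2 + 2 < r ^ 2 := by
      rw [← sq_abs r]; nlinarith [sq_nonneg R]
    simp only [hF, cutoffProfile_deriv_of_gt h2, cutoffProfile_zero h2.le, mul_zero, add_zero]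
  have hder (r : ℝ) : deriv F r = 4 * r ^ 3 * deriv (deriv (cutoffProfile R)) (r ^ 2) +
      6 * r * deriv (cutoffProfile R) (r ^ 2) := by
    have hs : HasDerivAt (fun r : ℝ => r ^ 2) (2 * r) r := by simpa using hasDerivAt_pow 2 r
    have e1 := ((hf2.differentiable (by norm_num)) (r ^ 2)).hasDerivAt.comp r hs
    have e2 := ((hf.differentiable (by norm_num)) (r ^ 2)).hasDerivAt.comp r hs
    have := (((hs.const_mul 2).mul e1).add e2).deriv
    refine Eq.trans this ?_
    simp only [Function.comp]
    ring
  have := hFs.integral_Ioi_deriv_eq hFc 0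
  simp only [hder] at this
  rw [this]
  simp only [hF]
  rw [cutoffProfile_one (by nlinarith [sq_nonneg R])]
  norm_num

/-- `∫ g = 8πa` for `g = v(1−ω)`, where `ω` is a scattering solution of `v`. -/
theorem integral_g_eq_eightPi_mul_scatteringLength
    (R : ℝ) (v : E3 → ℝ) (a : ℝ)
    (hmeas : Measurable v) (hnn : ∀ x, 0 ≤ v x) (hrad : Radial v) (hint : Integrable v)
    (hsupp : ∀ x : E3, R < ‖x‖ → v x = 0)
    (ha : IsScatteringLength (fun x => ENNReal.ofReal (v x)) R a)
    (ω : E3 → ℝ) (hω : IsScatteringSolution v R a ω) :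
    Integrable (fun x => v x * (1 - ω x)) ∧
    ∫ x, v x * (1 - ω x) = 8 * π * a := by
  obtain ⟨hωm, hω01, hωout, hωeq⟩ := hω
  have hR : 0 ≤ R := ha.1.1.trans ha.1.2
  have hgint : Integrable (fun x => v x * (1 - ω x)) := by
    refine hint.mono (hmeas.mul (measurable_const.sub hωm)).aestronglyMeasurable
      (Eventually.of_forall fun x => ?_)
    have h := hω01 x
    rw [norm_mul, Real.norm_eq_abs (1 - ω x), abs_of_nonneg (by linarith [h.2])]
    exact mul_le_of_le_one_right (norm_nonneg _) (by linarith [h.1])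
  refine ⟨hgint, ?_⟩
  set φ : E3 → ℝ := fun y => cutoffProfile R (‖y‖ ^ 2) with hφ
  have hφc : ContDiff ℝ (⊤ : ℕ∞) φ := (cutoffProfile_contDiff R).comp (contDiff_norm_sq ℝ)
  have hφs : HasCompactSupport φ := by
    refine HasCompactSupport.intro (isCompact_closedBall (0 : E3) (R ^ 2 + 2)) fun x hx => ?_
    have hx' : R ^ 2 + 2 < ‖x‖ := by simpa using hx
    exact cutoffProfile_zero (by nlinarith [sq_nonneg R])
  have key := hωeq φ hφc hφs
  have hrhs : ∫ x, (1 / 2) * (v x * (1 - ω x)) * φ x = (1 / 2) * ∫ x, v x * (1 - ω x) := by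
    rw [← integral_const_mul]
    congr 1
    ext x
    rcases le_or_gt ‖x‖ R with h | h
    · have : φ x = 1 := cutoffProfile_one (by nlinarith [norm_nonneg x])
      rw [this, mul_one]
    · simp [hsupp x h]
  have hlap (x : E3) : lap φ x = 4 * ‖x‖ ^ 2 * deriv (deriv (cutoffProfile R)) (‖x‖ ^ 2) +
      6 * deriv (cutoffProfile R) (‖x‖ ^ 2) :=
    lap_comp_norm_sq (contDiff_infty.1 (cutoffProfile_contDiff R) 2) x
  -- On the ball of radius `R` both sides vanish, so `ω` may be replaced by `a/|x|` everywhere.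
  have hlhs : (fun x => ω x * lap φ x) = fun x : E3 => (fun r : ℝ => a / r *
      (4 * r ^ 2 * deriv (deriv (cutoffProfile R)) (r ^ 2) +
        6 * deriv (cutoffProfile R) (r ^ 2))) ‖x‖ := by
    ext x
    rw [hlap]
    rcases le_or_gt ‖x‖ R with h | h
    · have h' : ‖x‖ ^ 2 < R ^ 2 + 1 := by nlinarith [norm_nonneg x]
      simp [cutoffProfile_deriv_of_lt h', cutoffProfile_deriv_deriv_of_lt h']
    · rw [hωout x h]
  have hvol : (volume : Measure E3).real (Metric.ball 0 1) = π * 4 / 3 := by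
    rw [Measure.real, EuclideanSpace.volume_ball_fin_three]
    exact (congrArg ENNReal.toReal (by simp)).trans
      (ENNReal.toReal_ofReal (by positivity : 0 ≤ π * 4 / 3))
  have hrad3 : ∫ r in Ioi (0 : ℝ), r ^ 2 * (a / r *
      (4 * r ^ 2 * deriv (deriv (cutoffProfile R)) (r ^ 2) +
        6 * deriv (cutoffProfile R) (r ^ 2))) = a * (-1) := by
    rw [← integral_radial R, ← integral_const_mul]
    refine setIntegral_congr_fun measurableSet_Ioi fun r hr => ?_
    have hr0 : r ≠ 0 := ne_of_gt hr
    field_simp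
  rw [hrhs, hlhs] at key
  have hpol := integral_fun_norm_addHaar (volume : Measure E3) (fun r : ℝ => a / r *
      (4 * r ^ 2 * deriv (deriv (cutoffProfile R)) (r ^ 2) +
        6 * deriv (cutoffProfile R) (r ^ 2)))
  rw [hvol] at hpol
  simp only [finrank_euclideanSpace_fin, smul_eq_mul, nsmul_eq_mul, Nat.add_one_sub_one,
    hrad3] at hpol
  have := hpol.symm.trans key
  push_cast at this
  linarith
end
end

section
/- There exists a constant C > 0, depending only on χ, such that the following holds. Let v satisfy Assumption 2.1 with range R and scattering length a, let ω be a scattering solution for v with g := v(1−ω), and let ℓ > 0 satisfy (χ∗χ)(z) ≥ 1/2 for all |z| ≤ R/ℓ. Then for every u ∈ ℝ³ and every x ∈ ℝ³: ∫_{ℝ³} w_{1,u}(x,y) dy ≤ C a and ∫_{ℝ³} w_{2,u}(x,y) dy ≤ C a; moreover, for every x ∈ ℝ³, g(x) ≤ W₁(x) ≤ g(x)(1 + C (R/ℓ)²). -/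
/-!
The total mass of `g = v (1 - ω)` is at most a universal multiple of `a`: testing the scattering
equation against a cutoff `φ (c x)` that equals `1` on a ball larger than the range of `v` turns
`½ ∫ g` into `-∫ ω Δ(φ (c ·))`. The Laplacian lives where `c‖x‖ ≥ 1`, so that `ω = a / ‖x‖ ≤ a c`
there, and scaling gives `½ ∫ g ≤ a ∫ |Δφ|` (`integral_g_le`).

On the support of `v` one has `½ ≤ χ∗χ ≤ 1`, so `g ≤ W₁ ≤ 2 g` and `W₂ = W₁ (1 + ω) ≤ 4 g`.
Since `χ` is bounded, the bounds on `∫ w_{1,u}` and `∫ w_{2,u}` follow from the one on `∫ g`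
(`integral_localized_le`).

For the comparison of `W₁` with `g`, evenness and `∫ χ² = 1` give
`1 - (χ∗χ)(z) = ½ ∫ (χ(y) - χ(y - z))² dy`. This is nonnegative, and at most a multiple of `‖z‖²`
because `χ` is Lipschitz with compact support (`one_sub_convChi_le`). Finally
`1 / s ≤ 1 + 2 (1 - s)` for `½ ≤ s ≤ 1`.
-/

open MeasureTheory Filter Real Set
open scoped ENNReal Topology

noncomputable section

/-- The cube `[−L/2, L/2]³`. -/
def cube (L : ℝ) : Set E3 := {x | ∀ i, x i ∈ Icc (-(L / 2)) (L / 2)}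

/-- Assumption 2.1: `v` is nonnegative, measurable, radial, integrable, of range `R`. -/
def SatisfiesAssumption (v : E3 → ℝ) (R : ℝ) : Prop :=
  Measurable v ∧ (∀ x, 0 ≤ v x) ∧ Radial v ∧ Integrable v ∧
  ∀ x : E3, R < ‖x‖ → v x = 0

/-- The fixed localization function `χ`: smooth, compactly supported in `[−1/2,1/2]³`,
even, nonnegative, with `∫ χ² = 1`. -/
def IsLocFn (χ : E3 → ℝ) : Prop :=
  ContDiff ℝ (⊤ : ℕ∞) χ ∧ HasCompactSupport χ ∧ (∀ x, 0 ≤ χ x) ∧ (∀ x : E3, χ (-x) = χ x) ∧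
  (∫ x, (χ x) ^ 2) = 1 ∧ tsupport χ ⊆ cube 1

/-- The convolution `χ∗χ`. -/
def convChi (χ : E3 → ℝ) (z : E3) : ℝ := ∫ y, χ y * χ (z - y)

/-- `W(x) = v(x)/(χ∗χ)(x/ℓ)`. -/
def Wpot (v χ : E3 → ℝ) (ℓ : ℝ) (x : E3) : ℝ := v x / convChi χ (ℓ⁻¹ • x)

/-- `W₁ = W·(1−ω)`. -/
def W1pot (v χ ω : E3 → ℝ) (ℓ : ℝ) (x : E3) : ℝ := Wpot v χ ℓ x * (1 - ω x)

/-- `W₂ = W·(1−ω²)`. -/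
def W2pot (v χ ω : E3 → ℝ) (ℓ : ℝ) (x : E3) : ℝ := Wpot v χ ℓ x * (1 - (ω x) ^ 2)

/-- `χ_u(x) = χ(x/ℓ − u)`. -/
def chiu (χ : E3 → ℝ) (ℓ : ℝ) (u x : E3) : ℝ := χ (ℓ⁻¹ • x - u)

/-- `w_u(x,y) = χ_u(x) W(x−y) χ_u(y)`. -/
def wU (v χ : E3 → ℝ) (ℓ : ℝ) (u x y : E3) : ℝ :=
  chiu χ ℓ u x * Wpot v χ ℓ (x - y) * chiu χ ℓ u y

/-- `w_{1,u}(x,y) = χ_u(x) W₁(x−y) χ_u(y)`. -/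
def w1U (v χ ω : E3 → ℝ) (ℓ : ℝ) (u x y : E3) : ℝ :=
  chiu χ ℓ u x * W1pot v χ ω ℓ (x - y) * chiu χ ℓ u y

/-- `w_{2,u}(x,y) = χ_u(x) W₂(x−y) χ_u(y)`. -/
def w2U (v χ ω : E3 → ℝ) (ℓ : ℝ) (u x y : E3) : ℝ :=
  chiu χ ℓ u x * W2pot v χ ω ℓ (x - y) * chiu χ ℓ u y

/-! ### The mass of `g` -/

lemma lap_comp_smul (φ : E3 → ℝ) (c : ℝ) (x : E3) :
    lap (fun y => φ (c • y)) x = c ^ 2 * lap φ (c • x) := by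
  have h1 : ∀ (f : E3 → ℝ) (y : E3), fderiv ℝ (fun y => f (c • y)) y = c • fderiv ℝ f (c • y) :=
    fun f y => fderiv_comp_smul c
  unfold lap
  rw [Finset.mul_sum]
  refine Finset.sum_congr rfl fun k _ => ?_
  set e : E3 := EuclideanSpace.single k (1 : ℝ)
  have h2 : (fun y => fderiv ℝ (fun y => φ (c • y)) y e)
      = c • fun y => (fun z => fderiv ℝ φ z e) (c • y) := by
    funext y
    rw [h1 φ y]
    rfl
  rw [h2, fderiv_const_smul_field, Pi.smul_apply, h1 (fun z => fderiv ℝ φ z e) x]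
  simp only [_root_.smul_apply, smul_eq_mul]
  ring

lemma continuous_lap {φ : E3 → ℝ} (hφ : ContDiff ℝ (⊤ : ℕ∞) φ) : Continuous (lap φ) := by
  unfold lap
  refine continuous_finsetSum _ fun k _ => ?_
  have h1 : ContDiff ℝ 1
      (fun y => fderiv ℝ φ y (EuclideanSpace.single k (1 : ℝ))) := by
    have h : ContDiff ℝ 1 (fderiv ℝ φ) := hφ.fderiv_right (by norm_cast)
    exact h.clm_apply contDiff_const
  exact (h1.continuous_fderiv one_ne_zero).clm_apply continuous_const

lemma lap_eq_zero_of_eventuallyEq_const {φ : E3 → ℝ} {x : E3} {b : ℝ}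
    (h : φ =ᶠ[𝓝 x] fun _ => b) : lap φ x = 0 := by
  unfold lap
  refine Finset.sum_eq_zero fun k _ => ?_
  have h1 : (fun y => fderiv ℝ φ y (EuclideanSpace.single k (1 : ℝ))) =ᶠ[𝓝 x] fun _ => 0 := by
    filter_upwards [h.fderiv (𝕜 := ℝ)] with y hy
    rw [hy]
    simp
  rw [h1.fderiv_eq]
  simp

lemma integrable_abs_lap {φ : E3 → ℝ} (hφ : ContDiff ℝ (⊤ : ℕ∞) φ) (hc : HasCompactSupport φ) :
    Integrable (fun x => |lap φ x|) := by
  refine ((continuous_lap hφ).integrable_of_hasCompactSupport ?_).abs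
  refine HasCompactSupport.intro hc fun x hx => ?_
  refine lap_eq_zero_of_eventuallyEq_const (b := 0) ?_
  filter_upwards [(isClosed_tsupport φ).isOpen_compl.mem_nhds hx] with y hy
  exact image_eq_zero_of_notMem_tsupport hy

lemma integrable_g {v ω : E3 → ℝ} {R a : ℝ} (hv : SatisfiesAssumption v R)
    (hω : IsScatteringSolution v R a ω) : Integrable (fun x => v x * (1 - ω x)) := by
  obtain ⟨hm, h0, -, hi, -⟩ := hv
  obtain ⟨hωm, hω01, -⟩ := hω
  refine hi.mono' (hm.mul (measurable_const.sub hωm)).aestronglyMeasurable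
    (Eventually.of_forall fun x => ?_)
  have h := hω01 x
  rw [Real.norm_of_nonneg (mul_nonneg (h0 x) (by linarith [h.2]))]
  nlinarith [h0 x, h.1]

/-- `∫ g` is at most a multiple of `a`, with a constant given by any fixed cutoff `φ` that equals
`1` on the unit ball. (In fact `∫ g = 8πa`, but only the order of magnitude is used.) -/
lemma integral_g_le {φ : E3 → ℝ} (hφ : ContDiff ℝ (⊤ : ℕ∞) φ) (hc : HasCompactSupport φ)
    (hφ1 : ∀ x : E3, ‖x‖ < 1 → φ x = 1) {v ω : E3 → ℝ} {R a : ℝ}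
    (hv : SatisfiesAssumption v R) (ha : a ∈ Icc 0 R) (hω : IsScatteringSolution v R a ω) :
    ∫ x, v x * (1 - ω x) ≤ 2 * (∫ x, |lap φ x|) * a := by
  obtain ⟨-, -, -, -, hvR⟩ := hv
  obtain ⟨-, -, hωR, hweak⟩ := hω
  have hR : 0 < R + 1 := by linarith [ha.1, ha.2]
  -- `R + 1` instead of `R`, since the range may be `0`.
  set c : ℝ := (R + 1)⁻¹ with hcdef
  have hc0 : 0 < c := inv_pos.mpr hR
  have hcR : c * (R + 1) = 1 := inv_mul_cancel₀ hR.ne'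
  have hnorm : ∀ x : E3, ‖c • x‖ = c * ‖x‖ := fun x => by
    rw [norm_smul, Real.norm_of_nonneg hc0.le]
  have key := hweak (fun x => φ (c • x)) (hφ.comp (contDiff_const_smul c))
    (hc.comp_smul hc0.ne')
  have hrhs : ∫ x, (1 / 2) * (v x * (1 - ω x)) * φ (c • x)
      = (1 / 2) * ∫ x, v x * (1 - ω x) := by
    rw [← integral_const_mul]
    refine integral_congr_ae (Eventually.of_forall fun x => ?_)
    by_cases hx : R < ‖x‖
    · simp [hvR x hx]
    · have : φ (c • x) = 1 := hφ1 _ (by rw [hnorm]; nlinarith)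
      simp [this]
  have hpt : ∀ x, ‖ω x * lap (fun y => φ (c • y)) x‖ ≤ a * c ^ 3 * |lap φ (c • x)| := by
    intro x
    rw [lap_comp_smul, norm_mul, norm_mul, Real.norm_eq_abs (lap φ _)]
    by_cases hx : ‖c • x‖ < 1
    · have : lap φ (c • x) = 0 := by
        refine lap_eq_zero_of_eventuallyEq_const (b := 1) ?_
        filter_upwards [(isOpen_lt continuous_norm continuous_const).mem_nhds hx] with y hy
        exact hφ1 y hy
      simp [this]
    · rw [hnorm, not_lt] at hx
      have hRx : R < ‖x‖ := by
        by_contra h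
        nlinarith
      have hx0 : 0 < ‖x‖ := by linarith [ha.1, ha.2]
      have h1 : ω x ≤ a * c := by
        rw [hωR x hRx, div_le_iff₀ hx0]
        nlinarith [ha.1]
      have h0 : 0 ≤ ω x := by
        rw [hωR x hRx]
        exact div_nonneg ha.1 hx0.le
      rw [Real.norm_of_nonneg h0, Real.norm_of_nonneg (sq_nonneg c)]
      calc ω x * (c ^ 2 * |lap φ (c • x)|) ≤ (a * c) * (c ^ 2 * |lap φ (c • x)|) := by gcongr
        _ = a * c ^ 3 * |lap φ (c • x)| := by ring
  have hint : Integrable (fun x => a * c ^ 3 * |lap φ (c • x)|) :=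
    ((integrable_abs_lap hφ hc).comp_smul hc0.ne').const_mul _
  have hbound := norm_integral_le_of_norm_le hint (Eventually.of_forall hpt)
  rw [integral_const_mul, Measure.integral_comp_smul volume (fun x => |lap φ x|) c, key, hrhs,
    finrank_euclideanSpace, Fintype.card_fin, smul_eq_mul, abs_of_pos (by positivity),
    norm_neg] at hbound
  have h3 : a * c ^ 3 * ((c ^ 3)⁻¹ * ∫ x, |lap φ x|) = a * ∫ x, |lap φ x| := by
    field_simp
  rw [h3] at hbound
  linarith [(le_abs_self _).trans hbound]

/-! ### The convolution `χ∗χ` near the origin -/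

lemma integrable_sq_chi {χ : E3 → ℝ} (hχ : IsLocFn χ) : Integrable (fun y => χ y ^ 2) := by
  -- Otherwise `∫ χ²` would take the junk value `0` instead of `1`.
  by_contra h
  have := hχ.2.2.2.2.1
  rw [integral_undef h] at this
  exact zero_ne_one this

/-- The identity `1 - (χ∗χ)(z) = ½ ∫ (χ(y) - χ(z - y))² dy`. -/
lemma one_sub_convChi {χ : E3 → ℝ} (hχ : IsLocFn χ) (z : E3) :
    1 - convChi χ z = (1 / 2) * ∫ y, (χ y - χ (z - y)) ^ 2 := by
  have i1 := integrable_sq_chi hχ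
  have i2 : Integrable (fun y => χ (z - y) ^ 2) := i1.comp_sub_left z
  have e2 : ∫ y, χ (z - y) ^ 2 = 1 := by
    rw [integral_sub_left_eq_self (fun y => χ y ^ 2) volume z, hχ.2.2.2.2.1]
  have i3 : Integrable (fun y => χ y * χ (z - y)) := by
    have hcont : Continuous χ := hχ.1.continuous
    refine Continuous.integrable_of_hasCompactSupport (by fun_prop) ?_
    exact hχ.2.1.mul_right
  have i12 : Integrable (fun y => χ y ^ 2 + χ (z - y) ^ 2) := i1.add i2
  have hexp : ∀ y, (χ y - χ (z - y)) ^ 2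
      = (χ y ^ 2 + χ (z - y) ^ 2) - 2 * (χ y * χ (z - y)) := fun y => by ring
  simp_rw [hexp]
  rw [integral_sub i12 (i3.const_mul 2), integral_add i1 i2, integral_const_mul, e2,
    hχ.2.2.2.2.1]
  unfold convChi
  ring

lemma convChi_le_one {χ : E3 → ℝ} (hχ : IsLocFn χ) (z : E3) : convChi χ z ≤ 1 := by
  have h : 0 ≤ ∫ y, (χ y - χ (z - y)) ^ 2 := integral_nonneg fun y => sq_nonneg _
  linarith [one_sub_convChi hχ z]

/-- Quadratic bound on `1 - χ∗χ` near the origin. -/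
lemma one_sub_convChi_le {χ : E3 → ℝ} (hχ : IsLocFn χ) :
    ∃ D : ℝ, 0 ≤ D ∧ ∀ z, 1 - convChi χ z ≤ D * ‖z‖ ^ 2 := by
  obtain ⟨L, hL⟩ := (hχ.1.of_le (by norm_cast) : ContDiff ℝ 1 χ).lipschitzWith_of_hasCompactSupport
    hχ.2.1 one_ne_zero
  set S := tsupport χ with hS
  have hSm : MeasurableSet S := (isClosed_tsupport χ).measurableSet
  have hSint : Integrable (S.indicator fun _ : E3 => (1 : ℝ)) :=
    (integrable_indicator_iff hSm).mpr (integrableOn_const hχ.2.1.isCompact.measure_lt_top.ne)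
  have hS0 : ∀ y, 0 ≤ S.indicator (fun _ : E3 => (1 : ℝ)) y := fun y =>
    indicator_nonneg (fun _ _ => zero_le_one) y
  refine ⟨(L : ℝ) ^ 2 * ∫ y, S.indicator (fun _ : E3 => (1 : ℝ)) y,
    mul_nonneg (sq_nonneg _) (integral_nonneg hS0), fun z => ?_⟩
  have hpt : ∀ y, (χ y - χ (z - y)) ^ 2 ≤ (L * ‖z‖) ^ 2 *
      (S.indicator (fun _ => (1 : ℝ)) y + S.indicator (fun _ => (1 : ℝ)) (z - y)) := by
    intro y
    by_cases h : y ∈ S ∨ z - y ∈ S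
    · have h1 : 1 ≤ S.indicator (fun _ => (1 : ℝ)) y + S.indicator (fun _ => (1 : ℝ)) (z - y) := by
        rcases h with h | h
        · linarith [indicator_of_mem h (fun _ : E3 => (1 : ℝ)), hS0 (z - y)]
        · linarith [indicator_of_mem h (fun _ : E3 => (1 : ℝ)), hS0 y]
      have h2 : |χ y - χ (z - y)| ≤ L * ‖z‖ := by
        have := hL.dist_le_mul y (y - z)
        rwa [Real.dist_eq, dist_eq_norm, sub_sub_cancel, ← neg_sub z y, hχ.2.2.2.1] at this
      calc (χ y - χ (z - y)) ^ 2 = |χ y - χ (z - y)| ^ 2 := (sq_abs _).symm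
        _ ≤ (L * ‖z‖) ^ 2 := by gcongr
        _ ≤ _ := le_mul_of_one_le_right (sq_nonneg _) h1
    · push Not at h
      rw [image_eq_zero_of_notMem_tsupport h.1, image_eq_zero_of_notMem_tsupport h.2]
      have := mul_nonneg (sq_nonneg (L * ‖z‖)) (add_nonneg (hS0 y) (hS0 (z - y)))
      simpa using this
  have hle := integral_mono_of_nonneg (Eventually.of_forall fun y => sq_nonneg _)
    ((hSint.add (hSint.comp_sub_left z)).const_mul ((L * ‖z‖) ^ 2)) (Eventually.of_forall hpt)
  rw [integral_const_mul] at hle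
  simp only [Pi.add_apply] at hle
  rw [integral_add hSint (hSint.comp_sub_left z),
    integral_sub_left_eq_self (S.indicator fun _ => (1 : ℝ)) volume z] at hle
  rw [one_sub_convChi hχ]
  linarith

/-! ### The localized potentials -/

/-- An integral `∫ χ_u(x) F(x - y) χ_u(y) dy` is controlled by `∫ G` whenever `0 ≤ F ≤ G`;
no measurability of `F` is required. -/
lemma integral_localized_le {χ F G : E3 → ℝ} {M : ℝ} (hχ0 : ∀ x, 0 ≤ χ x) (hM : ∀ x, χ x ≤ M)
    (hF0 : ∀ x, 0 ≤ F x) (hFG : ∀ x, F x ≤ G x) (hG : Integrable G) (ℓ : ℝ) (u x : E3) :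
    ∫ y, chiu χ ℓ u x * F (x - y) * chiu χ ℓ u y ≤ M ^ 2 * ∫ y, G y := by
  have hM0 : 0 ≤ M := (hχ0 0).trans (hM 0)
  rw [← integral_sub_left_eq_self G volume x, ← integral_const_mul]
  refine integral_mono_of_nonneg (Eventually.of_forall fun y => ?_)
    ((hG.comp_sub_left x).const_mul _) (Eventually.of_forall fun y => ?_)
  · exact mul_nonneg (mul_nonneg (hχ0 _) (hF0 _)) (hχ0 _)
  · have hG0 := (hF0 (x - y)).trans (hFG (x - y))
    calc chiu χ ℓ u x * F (x - y) * chiu χ ℓ u y ≤ M * G (x - y) * M :=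
          mul_le_mul (mul_le_mul (hM _) (hFG _) (hF0 _) hM0) (hM _) (hχ0 _) (mul_nonneg hM0 hG0)
      _ = M ^ 2 * G (x - y) := by ring

/-- **Lemma 5.1.** Uniform bounds on the localized potentials `w_{1,u}`, `w_{2,u}`
and comparison of `W₁` with `g = v(1−ω)`. -/
theorem localized_potential_integral_bounds
    (χ : E3 → ℝ) (hχ : IsLocFn χ) :
    ∃ C : ℝ, 0 < C ∧
      ∀ (v : E3 → ℝ) (R a : ℝ) (ω : E3 → ℝ) (ℓ : ℝ),
        SatisfiesAssumption v R →
        IsScatteringLength (fun x => ENNReal.ofReal (v x)) R a →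
        IsScatteringSolution v R a ω →
        0 < ℓ →
        (∀ z : E3, ‖z‖ ≤ R / ℓ → 1 / 2 ≤ convChi χ z) →
        (∀ u x : E3, ∫ y, w1U v χ ω ℓ u x y ≤ C * a) ∧
        (∀ u x : E3, ∫ y, w2U v χ ω ℓ u x y ≤ C * a) ∧
        (∀ x : E3,
          v x * (1 - ω x) ≤ W1pot v χ ω ℓ x ∧
          W1pot v χ ω ℓ x ≤ v x * (1 - ω x) * (1 + C * (R / ℓ) ^ 2)) := by
  obtain ⟨hsm, hcs, hχ0, -⟩ := id hχ
  obtain ⟨M, hM⟩ := hcs.exists_bound_of_continuous hsm.continuous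
  obtain ⟨D, hD0, hD⟩ := one_sub_convChi_le hχ
  let φ : ContDiffBump (0 : E3) := ⟨1, 2, one_pos, one_lt_two⟩
  have hφ : ContDiff ℝ (⊤ : ℕ∞) (φ : E3 → ℝ) := φ.contDiff
  have hφ1 : ∀ x : E3, ‖x‖ < 1 → φ x = 1 := fun x hx =>
    φ.one_of_mem_closedBall (mem_closedBall_zero_iff.mpr hx.le)
  set K : ℝ := ∫ x, |lap φ x| with hK
  have hK0 : 0 ≤ K := integral_nonneg fun x => abs_nonneg _
  refine ⟨8 * M ^ 2 * K + 2 * D + 1, by positivity, ?_⟩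
  intro v R a ω ℓ hv hlen hω hℓ hconv
  have ha := hlen.1
  have hgi := integrable_g hv hω
  have hg := integral_g_le hφ φ.hasCompactSupport hφ1 hv ha hω
  have hv0 := hv.2.1
  have hω01 := hω.2.1
  have hχM : ∀ x, χ x ≤ M := fun x => (le_abs_self _).trans (hM x)
  have hg0 : ∀ x, 0 ≤ v x * (1 - ω x) := fun x =>
    mul_nonneg (hv0 x) (by linarith [(hω01 x).2])
  have hz : ∀ x : E3, ‖x‖ ≤ R → ‖ℓ⁻¹ • x‖ ≤ R / ℓ := fun x hx => by
    rw [norm_smul, norm_inv, Real.norm_of_nonneg hℓ.le, inv_mul_eq_div]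
    gcongr
  have hW1 : ∀ x, W1pot v χ ω ℓ x = v x * (1 - ω x) / convChi χ (ℓ⁻¹ • x) := fun x => by
    unfold W1pot Wpot
    ring
  have hW2 : ∀ x, W2pot v χ ω ℓ x = W1pot v χ ω ℓ x * (1 + ω x) := fun x => by
    unfold W2pot W1pot
    ring
  have hcomp : ∀ x, v x * (1 - ω x) ≤ W1pot v χ ω ℓ x ∧
      W1pot v χ ω ℓ x ≤ 2 * (v x * (1 - ω x)) ∧
      W1pot v χ ω ℓ x ≤ v x * (1 - ω x) * (1 + 2 * D * (R / ℓ) ^ 2) := by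
    intro x
    rw [hW1]
    by_cases hx : R < ‖x‖
    · simp [hv.2.2.2.2 x hx]
    · rw [not_lt] at hx
      have hs := hconv _ (hz x hx)
      have hs1 := convChi_le_one hχ (ℓ⁻¹ • x)
      have hs2 := hD (ℓ⁻¹ • x)
      have hsq : ‖ℓ⁻¹ • x‖ ^ 2 ≤ (R / ℓ) ^ 2 := by
        gcongr
        exact hz x hx
      have hs3 : 1 - convChi χ (ℓ⁻¹ • x) ≤ D * (R / ℓ) ^ 2 :=
        hs2.trans (mul_le_mul_of_nonneg_left hsq hD0)
      have hpos : 0 < convChi χ (ℓ⁻¹ • x) := by linarith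
      have hgx := hg0 x
      generalize convChi χ (ℓ⁻¹ • x) = s at *
      generalize v x * (1 - ω x) = b at *
      refine ⟨?_, ?_, ?_⟩
      · rw [le_div_iff₀ hpos]
        nlinarith
      · rw [div_le_iff₀ hpos]
        nlinarith
      · rw [div_le_iff₀ hpos, mul_assoc]
        refine le_mul_of_one_le_right hgx ?_
        nlinarith [mul_nonneg hD0 (sq_nonneg (R / ℓ))]
  have hW10 : ∀ x, 0 ≤ W1pot v χ ω ℓ x := fun x => (hg0 x).trans (hcomp x).1
  have hW20 : ∀ x, 0 ≤ W2pot v χ ω ℓ x := fun x => by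
    rw [hW2]
    exact mul_nonneg (hW10 x) (by linarith [(hω01 x).1])
  have hW24 : ∀ x, W2pot v χ ω ℓ x ≤ 4 * (v x * (1 - ω x)) := fun x => by
    rw [hW2]
    nlinarith [hW10 x, (hcomp x).2.1, (hω01 x).2]
  have hW14 : ∀ x, W1pot v χ ω ℓ x ≤ 4 * (v x * (1 - ω x)) := fun x => by
    linarith [(hcomp x).2.1, hg0 x]
  have hfin : M ^ 2 * ∫ y, 4 * (v y * (1 - ω y)) ≤ (8 * M ^ 2 * K + 2 * D + 1) * a := by
    rw [integral_const_mul]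
    nlinarith [mul_le_mul_of_nonneg_left hg (sq_nonneg M), mul_nonneg hD0 ha.1, ha.1]
  refine ⟨fun u x => ?_, fun u x => ?_, fun x => ⟨(hcomp x).1, (hcomp x).2.2.trans ?_⟩⟩
  · exact (integral_localized_le hχ0 hχM hW10 hW14 (hgi.const_mul 4) ℓ u x).trans hfin
  · exact (integral_localized_le hχ0 hχM hW20 hW24 (hgi.const_mul 4) ℓ u x).trans hfin
  · refine mul_le_mul_of_nonneg_left ?_ (hg0 x)
    have : 0 ≤ 8 * M ^ 2 * K + 1 := by positivity
    nlinarith [mul_nonneg this (sq_nonneg (R / ℓ))]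
end
end

section
/- Let v satisfy Assumption 2.1 with range R and scattering length a, let ω be a scattering solution for v with g := v(1−ω), let L > 0, Λ = [−L/2, L/2]³, ρ_μ ∈ ℝ, and let ℓ > 0 satisfy (χ∗χ)(z) ≥ 1/2 for all |z| ≤ R/ℓ. Then for every N and all x₁, …, x_N ∈ Λ: Σ_{i=1}^N ( −ρ_μ ∫_{ℝ³} g(x_i − y) dy ) + Σ_{1≤i<j≤N} v(x_i − x_j) = ∫_{ℓ^{−1}(Λ + [−ℓ/2,ℓ/2]³)} [ Σ_{i=1}^N ( −ρ_μ ∫_{ℝ³} w_{1,u}(x_i, y) dy ) + Σ_{1≤i<j≤N} w_u(x_i, x_j) ] du. -/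
/-!
For fixed points `x, y`, substituting `u = x/ℓ − t` and using that `χ` is even gives
`∫ χ_u(x) χ_u(y) du = (χ∗χ)((x − y)/ℓ)` (`integral_chiu_mul_chiu`). This cancels the denominator in
`W` wherever `v` does not vanish, so averaging `w_u(x, y)` over `u ∈ ℝ³` returns `v(x − y)`
(`integral_wU`). Integrating in `y` as well and exchanging the two integrals turns the average of
`∫ w_{1,u}(x, y) dy` into `∫ g(x − y) dy` (`integral_integral_w1U`); the exchange is legitimate
because `|W₁| ≤ 2v` is integrable and `χ` is bounded and integrable. Finally `χ_u(x)` vanishes for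
`x ∈ Λ` when `u` lies outside `ℓ⁻¹(Λ + [−ℓ/2, ℓ/2]³)`, so averaging over that set is the same as
averaging over `ℝ³`.
-/

open MeasureTheory Filter Real Set
open scoped ENNReal Topology

noncomputable section

open scoped Pointwise

lemma integral_chiu_mul_chiu {χ : E3 → ℝ} (heven : ∀ x, χ (-x) = χ x) (ℓ : ℝ) (x y : E3) :
    ∫ u, chiu χ ℓ u x * chiu χ ℓ u y = convChi χ (ℓ⁻¹ • (x - y)) := by
  unfold convChi
  rw [← integral_sub_left_eq_self _ volume (ℓ⁻¹ • x)]
  refine integral_congr_ae (Eventually.of_forall fun u => ?_)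
  simp only [chiu]
  rw [sub_sub_cancel, ← heven (ℓ⁻¹ • y - (ℓ⁻¹ • x - u)), smul_sub]
  congr 2
  abel

lemma measurable_convChi {χ : E3 → ℝ} (hχ : Continuous χ) : Measurable (convChi χ) := by
  have h : StronglyMeasurable (Function.uncurry fun z y : E3 => χ y * χ (z - y)) := by
    apply Continuous.stronglyMeasurable
    fun_prop
  exact h.integral_prod_right.measurable

/-- The lower bound on `χ∗χ` is only available on the range of `v`; elsewhere `W` vanishes. -/
lemma Wpot_mul_convChi {χ v : E3 → ℝ} {R ℓ : ℝ} (hℓ : 0 < ℓ) (hv : ∀ x : E3, R < ‖x‖ → v x = 0)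
    (hconv : ∀ z : E3, ‖z‖ ≤ R / ℓ → 1 / 2 ≤ convChi χ z) (x : E3) :
    Wpot v χ ℓ x * convChi χ (ℓ⁻¹ • x) = v x ∧ |Wpot v χ ℓ x| ≤ 2 * |v x| := by
  unfold Wpot
  rcases lt_or_ge R ‖x‖ with h | h
  · simp [hv x h]
  · have h1 : 1 / 2 ≤ convChi χ (ℓ⁻¹ • x) := by
      apply hconv
      rw [norm_smul, norm_inv, Real.norm_of_nonneg hℓ.le, inv_mul_eq_div]
      gcongr
    refine ⟨div_mul_cancel₀ _ (by linarith), ?_⟩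
    rw [abs_div, abs_of_pos (by linarith : 0 < convChi χ (ℓ⁻¹ • x)), div_le_iff₀ (by linarith)]
    nlinarith [abs_nonneg (v x)]

lemma integrable_W1pot {χ v ω : E3 → ℝ} {R ℓ : ℝ} (hχ : Continuous χ) (hℓ : 0 < ℓ)
    (hvm : Measurable v) (hvi : Integrable v) (hv : ∀ x : E3, R < ‖x‖ → v x = 0)
    (hωm : Measurable ω) (hω : ∀ x, ω x ∈ Icc (0 : ℝ) 1)
    (hconv : ∀ z : E3, ‖z‖ ≤ R / ℓ → 1 / 2 ≤ convChi χ z) :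
    Integrable (W1pot v χ ω ℓ) := by
  have hm : Measurable (W1pot v χ ω ℓ) := by
    have := measurable_convChi hχ
    unfold W1pot Wpot
    fun_prop
  refine (hvi.norm.const_mul 2).mono' hm.aestronglyMeasurable (Eventually.of_forall fun x => ?_)
  have h1 : |1 - ω x| ≤ 1 := by
    rw [abs_le]
    constructor <;> linarith [(hω x).1, (hω x).2]
  rw [W1pot, norm_mul, Real.norm_eq_abs, Real.norm_eq_abs, Real.norm_eq_abs]
  calc |Wpot v χ ℓ x| * |1 - ω x| ≤ |Wpot v χ ℓ x| * 1 := by gcongr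
    _ ≤ 2 * |v x| := by simpa using (Wpot_mul_convChi hℓ hv hconv x).2

/-- Absolute convergence of the double integral over `u` and `y`: the `χ_u(y)` factor is bounded,
and what remains is a product of an integrable function of `u` and one of `y`. -/
lemma integrable_uncurry_w1U {χ v ω : E3 → ℝ} {ℓ : ℝ} (hχ : Continuous χ)
    (hχs : HasCompactSupport χ) (hW : Integrable (W1pot v χ ω ℓ)) (x : E3) :
    Integrable (Function.uncurry fun u y : E3 => w1U v χ ω ℓ u x y) (volume.prod volume) := by
  obtain ⟨C, hC⟩ := hχs.exists_bound_of_continuous hχ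
  have h1 : Integrable fun u => chiu χ ℓ u x :=
    (hχ.integrable_of_hasCompactSupport hχs).comp_sub_left (ℓ⁻¹ • x)
  have h2 : Integrable fun y => W1pot v χ ω ℓ (x - y) := hW.comp_sub_left x
  have hc : Continuous fun p : E3 × E3 => chiu χ ℓ p.1 p.2 := by
    unfold chiu
    fun_prop
  exact (h1.mul_prod h2).mul_bdd hc.aestronglyMeasurable (Eventually.of_forall fun p => hC _)

lemma integral_wU {χ v : E3 → ℝ} {R ℓ : ℝ} (heven : ∀ x, χ (-x) = χ x) (hℓ : 0 < ℓ)
    (hv : ∀ x : E3, R < ‖x‖ → v x = 0)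
    (hconv : ∀ z : E3, ‖z‖ ≤ R / ℓ → 1 / 2 ≤ convChi χ z) (x y : E3) :
    ∫ u, wU v χ ℓ u x y = v (x - y) := by
  rw [← (Wpot_mul_convChi hℓ hv hconv (x - y)).1, ← integral_chiu_mul_chiu heven,
    ← integral_const_mul]
  refine integral_congr_ae (Eventually.of_forall fun u => ?_)
  simp only [wU]
  ring

lemma integral_integral_w1U {χ v ω : E3 → ℝ} {R ℓ : ℝ} (hχ : Continuous χ)
    (hχs : HasCompactSupport χ) (heven : ∀ x, χ (-x) = χ x) (hℓ : 0 < ℓ)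
    (hv : ∀ x : E3, R < ‖x‖ → v x = 0)
    (hconv : ∀ z : E3, ‖z‖ ≤ R / ℓ → 1 / 2 ≤ convChi χ z)
    (hW : Integrable (W1pot v χ ω ℓ)) (x : E3) :
    ∫ u, ∫ y, w1U v χ ω ℓ u x y = ∫ y, v (x - y) * (1 - ω (x - y)) := by
  rw [integral_integral_swap (integrable_uncurry_w1U hχ hχs hW x)]
  refine integral_congr_ae (Eventually.of_forall fun y => ?_)
  simp only
  rw [← integral_wU heven hℓ hv hconv x y, ← integral_mul_const]
  refine integral_congr_ae (Eventually.of_forall fun u => ?_)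
  simp only [w1U, wU, W1pot]
  ring

lemma integrable_wU {χ v : E3 → ℝ} {ℓ : ℝ} (hχ : Continuous χ) (hχs : HasCompactSupport χ)
    (x y : E3) : Integrable fun u => wU v χ ℓ u x y := by
  obtain ⟨C, hC⟩ := hχs.exists_bound_of_continuous hχ
  have h1 : Integrable fun u => chiu χ ℓ u x :=
    (hχ.integrable_of_hasCompactSupport hχs).comp_sub_left (ℓ⁻¹ • x)
  have hc : Continuous fun u : E3 => chiu χ ℓ u y := by
    unfold chiu
    fun_prop
  exact (h1.mul_const _).mul_bdd hc.aestronglyMeasurable (Eventually.of_forall fun p => hC _)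

lemma chiu_eq_zero {χ : E3 → ℝ} {L ℓ : ℝ} (hℓ : 0 < ℓ) (hsupp : tsupport χ ⊆ cube 1) {x u : E3}
    (hx : x ∈ cube L) (hu : u ∉ ℓ⁻¹ • (cube L + cube ℓ)) : chiu χ ℓ u x = 0 := by
  by_contra h
  apply hu
  have h1 : ℓ⁻¹ • x - u ∈ cube 1 := hsupp (subset_tsupport χ h)
  -- `u = ℓ⁻¹ (x + (ℓ u - x))`, and `ℓ u - x` is `-ℓ` times a point of the unit cube
  rw [mem_inv_smul_set_iff₀ hℓ.ne']
  refine Set.mem_add.2 ⟨x, hx, ℓ • u - x, fun i => ?_, by abel⟩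
  have h2 := h1 i
  have h3 : (ℓ • u - x) i = -(ℓ * (ℓ⁻¹ • x - u) i) := by
    simp only [PiLp.sub_apply, PiLp.smul_apply, smul_eq_mul]
    field_simp
    ring
  rw [h3]
  exact ⟨by nlinarith [h2.2], by nlinarith [h2.1]⟩

/-- **Lemma 5.2.** Localization of the potential energy: sliding-average identity over
boxes of side `ℓ`. -/
theorem potential_energy_localization
    (χ : E3 → ℝ) (hχ : IsLocFn χ)
    (v : E3 → ℝ) (R a : ℝ) (ω : E3 → ℝ)
    (hv : SatisfiesAssumption v R)
    (ha : IsScatteringLength (fun x => ENNReal.ofReal (v x)) R a)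
    (hω : IsScatteringSolution v R a ω)
    (L ℓ : ℝ) (hL : 0 < L) (hℓ : 0 < ℓ)
    (hconv : ∀ z : E3, ‖z‖ ≤ R / ℓ → 1 / 2 ≤ convChi χ z)
    (ρμ : ℝ) (N : ℕ) (X : Fin N → E3) (hX : ∀ i, X i ∈ cube L) :
    (∑ i, -(ρμ * ∫ y : E3, v (X i - y) * (1 - ω (X i - y))))
        + (∑ i, ∑ j, if i < j then v (X i - X j) else 0)
      = ∫ u in ℓ⁻¹ • (cube L + cube ℓ),
          ((∑ i, -(ρμ * ∫ y : E3, w1U v χ ω ℓ u (X i) y))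
            + ∑ i, ∑ j, if i < j then wU v χ ℓ u (X i) (X j) else 0) := by
  obtain ⟨hsm, hχs, -, heven, -, hsupp⟩ := hχ
  obtain ⟨hvm, -, -, hvi, hv0⟩ := hv
  obtain ⟨hωm, hω1, -, -⟩ := hω
  have hχ : Continuous χ := hsm.continuous
  have hW : Integrable (W1pot v χ ω ℓ) := integrable_W1pot hχ hℓ hvm hvi hv0 hωm hω1 hconv
  have hpair : ∀ i j, Integrable fun u => if i < j then wU v χ ℓ u (X i) (X j) else 0 := by
    intro i j
    split_ifs
    · exact integrable_wU hχ hχs _ _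
    · exact integrable_zero _ _ _
  have hone : ∀ i, Integrable fun u => -(ρμ * ∫ y : E3, w1U v χ ω ℓ u (X i) y) := fun i =>
    ((integrable_uncurry_w1U hχ hχs hW (X i)).integral_prod_left.const_mul ρμ).neg
  -- outside the box of integration every `χ_u (X i)` vanishes
  rw [setIntegral_eq_integral_of_forall_compl_eq_zero fun u hu => by
    simp [w1U, wU, chiu_eq_zero hℓ hsupp (hX _) hu]]
  rw [integral_add (integrable_finsetSum _ fun i _ => hone i)
    (integrable_finsetSum _ fun i _ => integrable_finsetSum _ fun j _ => hpair i j),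
    integral_finsetSum _ fun i _ => hone i,
    integral_finsetSum _ fun i _ => integrable_finsetSum _ fun j _ => hpair i j]
  congr 1
  · refine Finset.sum_congr rfl fun i _ => ?_
    rw [integral_neg, integral_const_mul,
      integral_integral_w1U hχ hχs heven hℓ hv0 hconv hW]
  · refine Finset.sum_congr rfl fun i _ => ?_
    rw [integral_finsetSum _ fun j _ => hpair i j]
    refine Finset.sum_congr rfl fun j _ => ?_
    split_ifs
    · exact (integral_wU heven hℓ hv0 hconv _ _).symm
    · simp
end
end
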